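/- Let T be a torus and C, C' essential oriented simple closed curves in T. Then C' can be obtained from C by a surgery along an embedded arc β with β ∩ C = ∂β if and only if the algebraic intersection number C'·C equals ±2. -/

import Mathlib

/-- The torus `T = ℝ/ℤ × ℝ/ℤ`. -/
def Torus : Type := AddCircle (1 : ℝ) × AddCircle (1 : ℝ)

noncomputable instance : TopologicalSpace Torus :=
  inferInstanceAs (TopologicalSpace (AddCircle (1 : ℝ) × AddCircle (1 : ℝ)))

/-- The covering projection `ℝ × ℝ → T`. -/
noncomputable def torusMk (v : ℝ × ℝ) : Torus := ((v.1 : AddCircle (1 : ℝ)), (v.2 : AddCircle (1 : ℝ)))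

/-- An essential oriented simple closed curve on the torus, given by a
continuous lift `f : ℝ → ℝ × ℝ` which is periodic of period `1` up to the
deck translation `(p, q)`; the pair `(p, q)` is the homology class of the
curve, it is primitive (coprime) since the curve is essential and simple,
and the induced loop `ℝ/ℤ → T` is injective. -/
structure TorusCurve where
  /-- a lift of the curve to the universal cover -/
  f : ℝ → ℝ × ℝ
  cont : Continuous f
  /-- the slope: first coordinate of the homology class -/
  p : ℤ
  /-- the slope: second coordinate of the homology class -/
  q : ℤ
  prim : IsCoprime p q
  per : ∀ x : ℝ, f (x + 1) = f x + ((p : ℝ), (q : ℝ))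
  inj : ∀ x y : ℝ, torusMk (f x) = torusMk (f y) → ∃ n : ℤ, y = x + n

/-- The image of the curve in the torus. -/
def TorusCurve.image (C : TorusCurve) : Set Torus :=
  Set.range fun x => torusMk (C.f x)

/-- `C'` is obtained from `C` by a surgery along an embedded arc `β`:
there is an embedded band `N(β) ≅ β × I = [0,1] × [0,1]` with
`C ∩ N(β) = ∂β × I = {0,1} × I`, and
`C' = (C - ∂β × I) ∪ (β × ∂I)`. -/
def ObtainedBySurgery (C C' : Set Torus) : Prop :=
  ∃ e : ℝ × ℝ → Torus, Continuous e ∧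
    Set.InjOn e (Set.Icc 0 1 ×ˢ Set.Icc 0 1) ∧
    C ∩ e '' (Set.Icc 0 1 ×ˢ Set.Icc 0 1)
      = e '' (({0, 1} : Set ℝ) ×ˢ Set.Icc 0 1) ∧
    C' = (C \ e '' (({0, 1} : Set ℝ) ×ˢ Set.Icc 0 1))
          ∪ e '' (Set.Icc 0 1 ×ˢ ({0, 1} : Set ℝ))

section
open Set Complex

/-- log lifting on a simply connected space -/
theorem sur_exists_log {A : Type*} [TopologicalSpace A] [SimplyConnectedSpace A]
    [LocallyPathConnectedSpace A] (φ : A → ℂ) (hc : Continuous φ) (h0 : ∀ a, φ a ≠ 0) :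
    ∃ L : A → ℂ, Continuous L ∧ ∀ a, exp (L a) = φ a := by
  obtain ⟨a0⟩ : Nonempty A := inferInstance
  obtain ⟨F, ⟨-, hF⟩, -⟩ := isCoveringMapOn_exp.existsUnique_continuousMap_lifts
    (⟨φ, hc⟩ : C(A, ℂ)) (a₀ := a0) (e₀ := log (φ a0)) (by simp [exp_log (h0 a0)])
    (fun a => by simpa using h0 a)
  exact ⟨F, F.continuous, fun a => congrFun hF a⟩

/-- clamp to the unit interval -/
noncomputable def sclamp (x : ℝ) : ℝ := max 0 (min 1 x)

theorem sclamp_cont : Continuous sclamp := by unfold sclamp; fun_prop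

theorem sclamp_mem (x : ℝ) : sclamp x ∈ Icc (0:ℝ) 1 := by
  unfold sclamp; exact ⟨le_max_left _ _, max_le zero_le_one (min_le_left _ _)⟩

theorem sclamp_eq {x : ℝ} (h : x ∈ Icc (0:ℝ) 1) : sclamp x = x := by
  unfold sclamp; rw [min_eq_right h.2, max_eq_right h.1]

theorem sur_log_sq (φ : ℝ × ℝ → ℂ) (hc : ContinuousOn φ (Icc 0 1 ×ˢ Icc 0 1))
    (h0 : ∀ s ∈ Icc (0:ℝ) 1, ∀ t ∈ Icc (0:ℝ) 1, φ (s, t) ≠ 0) :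
    ∃ L : ℝ × ℝ → ℂ, Continuous L ∧
      ∀ s ∈ Icc (0:ℝ) 1, ∀ t ∈ Icc (0:ℝ) 1, exp (L (s, t)) = φ (s, t) := by
  obtain ⟨L, hL, hL'⟩ := sur_exists_log (fun p : ℝ × ℝ => φ (sclamp p.1, sclamp p.2))
    (hc.comp_continuous (by have := sclamp_cont; fun_prop)
      (fun p => ⟨sclamp_mem _, sclamp_mem _⟩))
    (fun p => h0 _ (sclamp_mem _) _ (sclamp_mem _))
  refine ⟨L, hL, fun s hs t ht => ?_⟩
  rw [hL']; simp only [sclamp_eq hs, sclamp_eq ht]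

theorem sur_log_line (φ : ℝ → ℂ) (hc : ContinuousOn φ (Icc 0 1))
    (h0 : ∀ s ∈ Icc (0:ℝ) 1, φ s ≠ 0) :
    ∃ L : ℝ → ℂ, Continuous L ∧ ∀ s ∈ Icc (0:ℝ) 1, exp (L s) = φ s := by
  obtain ⟨L, hL, hL'⟩ := sur_exists_log (fun p : ℝ => φ (sclamp p))
    (hc.comp_continuous sclamp_cont sclamp_mem)
    (fun p => h0 _ (sclamp_mem _))
  refine ⟨L, hL, fun s hs => ?_⟩
  rw [hL']; simp only [sclamp_eq hs]

/-- a continuous function on a preconnected set with integer values is constant -/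
theorem sur_int_const {A : Type*} [TopologicalSpace A] {S : Set A} (hS : IsPreconnected S)
    (g : A → ℝ) (hg : ContinuousOn g S) (hi : ∀ a ∈ S, ∃ n : ℤ, g a = n)
    {a b : A} (ha : a ∈ S) (hb : b ∈ S) : g a = g b := by
  obtain ⟨n, hn⟩ := hi a ha
  obtain ⟨m, hm⟩ := hi b hb
  have key : ∀ a ∈ S, ∀ b ∈ S, ∀ n m : ℤ, g a = n → g b = m → n ≤ m := by
    intro a ha b hb n m hn hm
    by_contra hlt
    push Not at hlt
    have hlt' : (m:ℝ) + 1 ≤ n := by exact_mod_cast hlt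
    have := hS.intermediate_value hb ha hg
    have hmem : (m:ℝ) + 1/2 ∈ Icc (g b) (g a) := by
      rw [hn, hm]; constructor <;> linarith
    obtain ⟨c, hc, hc'⟩ := this hmem
    obtain ⟨k, hk⟩ := hi c hc
    rw [hk] at hc'
    have h1 : (m:ℝ) < k := by linarith
    have h2 : (k:ℝ) < m + 1 := by linarith
    have h1' : m < k := by exact_mod_cast h1
    have h2' : k < m + 1 := by exact_mod_cast h2
    omega
  rw [hn, hm, le_antisymm (key a ha b hb n m hn hm) (key b hb a ha m n hm hn)]

theorem sur_exp_eq_re {x y : ℂ} (h : exp x = exp y) :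
    ∃ n : ℤ, x = y + n * (2 * Real.pi * I) := Complex.exp_eq_exp_iff_exists_int.mp h

/-- two logs of the same function on a preconnected set differ by a constant -/
theorem sur_log_unique {A : Type*} [TopologicalSpace A] {S : Set A} (hS : IsPreconnected S)
    {L M : A → ℂ} (hL : ContinuousOn L S) (hM : ContinuousOn M S)
    (h : ∀ a ∈ S, exp (L a) = exp (M a)) {a b : A} (ha : a ∈ S) (hb : b ∈ S) :
    L a - M a = L b - M b := by
  have hpi : (2 * Real.pi) ≠ 0 := by positivity
  have hex : ∀ a ∈ S, ∃ n : ℤ, L a - M a = n * (2 * Real.pi * I) := by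
    intro a ha
    obtain ⟨n, hn⟩ := sur_exp_eq_re (h a ha)
    exact ⟨n, by rw [hn]; ring⟩
  have hc : ContinuousOn (fun a => (L a - M a).im / (2 * Real.pi)) S :=
    (Complex.continuous_im.comp_continuousOn (hL.sub hM)).div_const _
  have := sur_int_const hS (fun a => (L a - M a).im / (2 * Real.pi)) hc (by
    intro a ha
    obtain ⟨n, hn⟩ := hex a ha
    refine ⟨n, ?_⟩
    simp only [hn]
    simp) ha hb
  obtain ⟨n, hn⟩ := hex a ha
  obtain ⟨m, hm⟩ := hex b hb
  simp only [hn, hm] at this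
  simp at this
  have h3 : (n:ℂ) = m := by exact_mod_cast this
  rw [hn, hm, h3]

/-- total change of the logarithm along a path -/
noncomputable def turn (φ : ℝ → ℂ) : ℂ :=
  open Classical in
  if h : ∃ L : ℝ → ℂ, ContinuousOn L (Icc 0 1) ∧ ∀ t ∈ Icc (0:ℝ) 1, exp (L t) = φ t
  then h.choose 1 - h.choose 0 else 0

theorem s0mem : (0:ℝ) ∈ Icc (0:ℝ) 1 := ⟨le_rfl, zero_le_one⟩
theorem s1mem : (1:ℝ) ∈ Icc (0:ℝ) 1 := ⟨zero_le_one, le_rfl⟩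

theorem turn_eq {φ L : ℝ → ℂ} (hL : ContinuousOn L (Icc 0 1))
    (h : ∀ t ∈ Icc (0:ℝ) 1, exp (L t) = φ t) : turn φ = L 1 - L 0 := by
  have hex : ∃ L : ℝ → ℂ, ContinuousOn L (Icc 0 1) ∧ ∀ t ∈ Icc (0:ℝ) 1, exp (L t) = φ t :=
    ⟨L, hL, h⟩
  unfold turn
  rw [dif_pos hex]
  have := sur_log_unique (isPreconnected_Icc (a := (0:ℝ)) (b := 1)) hex.choose_spec.1 hL
    (fun t ht => by rw [hex.choose_spec.2 t ht, h t ht]) s0mem s1mem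
  linear_combination -this

theorem turn_congr {φ ψ : ℝ → ℂ} (h : ∀ t ∈ Icc (0:ℝ) 1, φ t = ψ t) : turn φ = turn ψ := by
  by_cases hex : ∃ L : ℝ → ℂ, ContinuousOn L (Icc 0 1) ∧ ∀ t ∈ Icc (0:ℝ) 1, exp (L t) = ψ t
  · obtain ⟨L, hL, hL'⟩ := hex
    rw [turn_eq hL hL', turn_eq hL (fun t ht => by rw [hL' t ht, h t ht])]
  · have : ¬ ∃ L : ℝ → ℂ, ContinuousOn L (Icc 0 1) ∧ ∀ t ∈ Icc (0:ℝ) 1, exp (L t) = φ t := by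
      rintro ⟨L, hL, hL'⟩
      exact hex ⟨L, hL, fun t ht => by rw [hL' t ht, h t ht]⟩
    unfold turn
    rw [dif_neg hex, dif_neg this]

/-- multiplication by an exponential -/
theorem turn_mul_exp {φ φ' ψ : ℝ → ℂ} (hc : ContinuousOn φ' (Icc 0 1))
    (h0 : ∀ t ∈ Icc (0:ℝ) 1, φ' t ≠ 0) (hψ : ContinuousOn ψ (Icc 0 1))
    (h : ∀ t ∈ Icc (0:ℝ) 1, φ t = exp (ψ t) * φ' t) :
    turn φ = turn φ' + (ψ 1 - ψ 0) := by
  obtain ⟨L, hL, hL'⟩ := sur_log_line φ' hc h0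
  rw [turn_eq hL.continuousOn hL', turn_eq (L := fun t => ψ t + L t) (hψ.add hL.continuousOn)
    (fun t ht => by rw [exp_add, hL' t ht, h t ht])]
  ring

theorem turn_rect (Φ : ℝ → ℝ → ℂ)
    (hc : ContinuousOn (fun p : ℝ × ℝ => Φ p.1 p.2) (Icc 0 1 ×ˢ Icc 0 1))
    (h0 : ∀ s ∈ Icc (0:ℝ) 1, ∀ t ∈ Icc (0:ℝ) 1, Φ s t ≠ 0) :
    turn (fun s => Φ s 0) + turn (fun t => Φ 1 t) =
      turn (fun t => Φ 0 t) + turn (fun s => Φ s 1) := by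
  obtain ⟨L, hL, hL'⟩ := sur_log_sq _ hc h0
  rw [turn_eq (φ := fun s => Φ s 0) (L := fun s => L (s, 0)) (by fun_prop)
      (fun s hs => hL' s hs 0 s0mem),
    turn_eq (φ := fun s => Φ s 1) (L := fun s => L (s, 1)) (by fun_prop)
      (fun s hs => hL' s hs 1 s1mem),
    turn_eq (φ := fun s => Φ 0 s) (L := fun s => L (0, s)) (by fun_prop)
      (fun s hs => hL' 0 s0mem s hs),
    turn_eq (φ := fun s => Φ 1 s) (L := fun s => L (1, s)) (by fun_prop)
      (fun s hs => hL' 1 s1mem s hs)]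
  ring

/-- homotopy invariance for loops -/
theorem turn_homotopy (Φ : ℝ → ℝ → ℂ)
    (hc : ContinuousOn (fun p : ℝ × ℝ => Φ p.1 p.2) (Icc 0 1 ×ˢ Icc 0 1))
    (h0 : ∀ s ∈ Icc (0:ℝ) 1, ∀ t ∈ Icc (0:ℝ) 1, Φ s t ≠ 0)
    (hper : ∀ s ∈ Icc (0:ℝ) 1, Φ s 0 = Φ s 1) :
    turn (fun t => Φ 0 t) = turn (fun t => Φ 1 t) := by
  have := turn_rect Φ hc h0
  rw [turn_congr (φ := fun s => Φ s 0) (ψ := fun s => Φ s 1) hper] at this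
  linear_combination -this

/-- the turn of a loop is an integer multiple of `2πi` -/
theorem turn_loop (φ : ℝ → ℂ) (hc : ContinuousOn φ (Icc 0 1))
    (h0 : ∀ t ∈ Icc (0:ℝ) 1, φ t ≠ 0) (hper : φ 0 = φ 1) :
    ∃ n : ℤ, turn φ = n * (2 * Real.pi * I) := by
  obtain ⟨L, hL, hL'⟩ := sur_log_line φ hc h0
  obtain ⟨n, hn⟩ := sur_exp_eq_re (x := L 1) (y := L 0)
    (by rw [hL' _ s0mem, hL' _ s1mem, hper])
  exact ⟨n, by rw [turn_eq hL.continuousOn hL', hn]; ring⟩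

theorem turn_const (c : ℂ) (hc : c ≠ 0) : turn (fun _ => c) = 0 := by
  rw [turn_eq (L := fun _ => log c) continuousOn_const (fun _ _ => exp_log hc)]
  simp

end

section
open Set Complex

theorem sur_factor {K Y A : Type*} [TopologicalSpace K] [TopologicalSpace Y] [TopologicalSpace A]
    [CompactSpace K] [T2Space Y] {F : K → Y} (hF : Continuous F) (hinj : Function.Injective F)
    (q : A → Y) (hq : Continuous q) (hr : ∀ a, q a ∈ range F) :
    ∃ p : A → K, Continuous p ∧ ∀ a, F (p a) = q a := by
  choose p hp using hr
  refine ⟨p, ?_, hp⟩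
  rw [(hF.isClosedEmbedding hinj).isInducing.continuous_iff]
  convert hq using 1
  funext a
  exact hp a

/-- the unit circle -/
noncomputable def scirc (θ : ℝ) : ℂ := exp (2 * Real.pi * I * θ)

theorem scirc_cont : Continuous scirc := by unfold scirc; fun_prop

theorem scirc_norm (θ : ℝ) : ‖scirc θ‖ = 1 := by
  unfold scirc
  rw [show (2 * Real.pi * I * θ : ℂ) = ((2 * Real.pi * θ : ℝ) : ℂ) * I by push_cast; ring]
  exact norm_exp_ofReal_mul_I _

theorem scirc_ne (θ : ℝ) : scirc θ ≠ 0 := exp_ne_zero _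

theorem scirc_zero : scirc 0 = 1 := by simp [scirc]

theorem scirc_one : scirc 1 = 1 := by simp [scirc]

theorem scirc_half (θ : ℝ) : scirc (θ + 1/2) = - scirc θ := by
  unfold scirc
  rw [show (2 * Real.pi * I * ((θ + 1/2 : ℝ) : ℂ) : ℂ) = 2 * Real.pi * I * θ + Real.pi * I by
    push_cast; ring, exp_add, exp_pi_mul_I]
  ring

theorem deg_mem {E : ℂ → ℂ} (hc : Continuous E) {R : ℝ}
    (hinj : InjOn E (Metric.closedBall 0 R)) {D : ℂ} (hD0 : D ≠ 0) (hD : ‖D‖ ≤ R) (κ : ℝ) (hκ : |κ| ≤ 1) (θ : ℝ) : κ * (D * scirc θ) ∈ Metric.closedBall (0:ℂ) R := by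
  simp only [Metric.mem_closedBall, dist_zero_right, norm_mul, scirc_norm, mul_one]
  rw [Complex.norm_real, Real.norm_eq_abs]
  nlinarith [norm_nonneg D]

theorem deg_ne {E : ℂ → ℂ} (hc : Continuous E) {R : ℝ}
    (hinj : InjOn E (Metric.closedBall 0 R)) {D : ℂ} (hD0 : D ≠ 0) (hD : ‖D‖ ≤ R) (κ κ' : ℝ) (hκ : |κ| ≤ 1) (hκ' : |κ'| ≤ 1) (hne : κ ≠ κ') (θ : ℝ) :
    E (κ * (D * scirc θ)) - E (κ' * (D * scirc θ)) ≠ 0 := by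
  intro h
  have := hinj (deg_mem hc hinj hD0 hD κ hκ θ) (deg_mem hc hinj hD0 hD κ' hκ' θ) (sub_eq_zero.mp h)
  have h2 := mul_right_cancel₀ (mul_ne_zero hD0 (scirc_ne θ)) this
  exact hne (by exact_mod_cast h2)

theorem deg_odd {E : ℂ → ℂ} (hc : Continuous E) {R : ℝ}
    (hinj : InjOn E (Metric.closedBall 0 R)) {D : ℂ} (hD0 : D ≠ 0) (hD : ‖D‖ ≤ R) : ∃ k : ℤ, turn (fun θ => E (D * scirc θ) - E 0) =
    ((2 * k + 1 : ℤ) : ℂ) * (2 * Real.pi * I) := by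
  have hcc := scirc_cont
  have h1 := turn_homotopy (fun κ θ => E (D * scirc θ) - E ((-κ : ℝ) * (D * scirc θ)))
    (by fun_prop)
    (by
      intro s hs t ht
      have := deg_ne hc hinj hD0 hD 1 (-s) (by simp) (by rw [abs_neg, abs_of_nonneg hs.1]; exact hs.2)
        (by linarith [hs.1]) t
      simpa using this)
    (by intro s hs; simp only [scirc_zero, scirc_one])
  obtain ⟨L, hL, hL'⟩ := sur_exists_log
    (fun θ : ℝ => E (D * scirc θ) - E ((-1 : ℝ) * (D * scirc θ))) (by fun_prop)
    (by
      intro t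
      have := deg_ne hc hinj hD0 hD 1 (-1) (by simp) (by simp) (by norm_num) t
      simpa using this)
  have hanti : ∀ θ, exp (L (θ + 1/2)) = exp (L θ + Real.pi * I) := by
    intro θ
    rw [exp_add, exp_pi_mul_I, hL', hL', scirc_half]
    push_cast
    simp only [mul_neg, neg_mul, neg_neg, one_mul, mul_one]
    ring
  have h2 := sur_log_unique (isPreconnected_univ (α := ℝ)) (L := fun θ => L (θ + 1/2))
    (M := fun θ => L θ + Real.pi * I) (by fun_prop) (by fun_prop) (fun θ _ => hanti θ)
    (mem_univ 0) (mem_univ (1/2))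
  obtain ⟨k, hk⟩ := sur_exp_eq_re (hanti 0)
  refine ⟨k, ?_⟩
  have h3 := turn_eq (φ := fun θ : ℝ => E (D * scirc θ) - E ((-1 : ℝ) * (D * scirc θ)))
    (L := L) hL.continuousOn (fun t _ => hL' t)
  simp only [neg_zero, ofReal_zero, zero_mul] at h1
  rw [h1]
  rw [h3]
  norm_num at h2 hk
  push_cast
  linear_combination (-1 : ℂ) * h2 + 2 * hk

theorem deg_ball {E : ℂ → ℂ} (hc : Continuous E) {R : ℝ}
    (hinj : InjOn E (Metric.closedBall 0 R)) {D : ℂ} (hD0 : D ≠ 0) (hD : ‖D‖ ≤ R) (hturn : turn (fun θ => E (D * scirc θ) - E 0) ≠ 0) :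
    ∃ η > 0, ∀ z, ‖z - E 0‖ < η → z ∈ E '' (Metric.closedBall 0 ‖D‖) := by
  have hcc := scirc_cont
  obtain ⟨t0, ht0, hmin⟩ := (isCompact_Icc (a := (0:ℝ)) (b := 1)).exists_isMinOn ⟨0, s0mem⟩
    (f := fun θ => ‖E (D * scirc θ) - E 0‖) (by fun_prop)
  have hne : ∀ θ, E (D * scirc θ) - E 0 ≠ 0 := by
    intro t
    have := deg_ne hc hinj hD0 hD 1 0 (by simp) (by simp) (by norm_num) t
    simpa using this
  refine ⟨‖E (D * scirc t0) - E 0‖, norm_pos_iff.mpr (hne t0), ?_⟩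
  intro z hz
  by_contra hzE
  apply hturn
  have h1 := turn_homotopy (fun κ θ => E (D * scirc θ) - (E 0 + κ * (z - E 0)))
    (by fun_prop)
    (by
      intro s hs t ht h
      have h2 : E (D * scirc t) - E 0 = s * (z - E 0) := by linear_combination h
      have h3 : ‖E (D * scirc t0) - E 0‖ ≤ ‖E (D * scirc t) - E 0‖ := hmin ht
      rw [h2, norm_mul, Complex.norm_real, Real.norm_eq_abs, abs_of_nonneg hs.1] at h3
      nlinarith [norm_nonneg (z - E 0), hs.2])
    (by intro s hs; simp only [scirc_zero, scirc_one])
  have h2 := turn_homotopy (fun κ θ => E (κ * (D * scirc θ)) - z)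
    (by fun_prop)
    (by
      intro s hs t ht h
      apply hzE
      refine ⟨s * (D * scirc t), ?_, sub_eq_zero.mp h⟩
      exact deg_mem hc (hinj.mono (Metric.closedBall_subset_closedBall hD)) hD0 le_rfl s
        (by rw [abs_of_nonneg hs.1]; exact hs.2) t)
    (by intro s hs; simp only [scirc_zero, scirc_one])
  simp only [ofReal_zero, ofReal_one, zero_mul, one_mul, add_zero, add_sub_cancel] at h1 h2
  rw [h1, ← h2]
  apply turn_const
  intro h
  exact hzE ⟨0, by simp, sub_eq_zero.mp h⟩

theorem deg_pm_one {E : ℂ → ℂ} (hc : Continuous E) {R : ℝ}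
    (hinj : InjOn E (Metric.closedBall 0 R)) {D : ℂ} (hD0 : D ≠ 0) (hD : ‖D‖ ≤ R) : turn (fun θ => E (D * scirc θ) - E 0) = 2 * Real.pi * I ∨
    turn (fun θ => E (D * scirc θ) - E 0) = -(2 * Real.pi * I) := by
  have hcc := scirc_cont
  have h2pi : (2 * Real.pi * I : ℂ) ≠ 0 := two_pi_I_ne_zero
  obtain ⟨j, hj⟩ := deg_odd hc hinj hD0 hD
  set o : ℤ := 2 * j + 1 with ho
  have ho0 : o ≠ 0 := by omega
  have hturn : turn (fun θ => E (D * scirc θ) - E 0) ≠ 0 := by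
    rw [hj]; exact mul_ne_zero (by exact_mod_cast ho0) h2pi
  obtain ⟨η, hη, hball⟩ := deg_ball hc hinj hD0 hD hturn
  -- clamp of the real part
  let lam : ℂ → ℂ := fun z => ((min z.re (Real.log (η/2)) : ℝ) : ℂ) + z.im * I
  have hlam : Continuous lam := by
    simp only [lam]; fun_prop
  have hlamn : ∀ z, ‖exp (lam z)‖ < η := by
    intro z
    rw [Complex.norm_exp]
    simp only [lam, add_re, ofReal_re, mul_re, I_re, mul_zero, ofReal_im, I_im, mul_one, sub_self,
      add_zero]
    calc Real.exp (min z.re (Real.log (η/2))) ≤ Real.exp (Real.log (η/2)) :=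
          Real.exp_le_exp.mpr (min_le_right _ _)
      _ = η/2 := Real.exp_log (by positivity)
      _ < η := by linarith
  obtain ⟨G, hG, hG'⟩ := sur_factor (K := Metric.closedBall (0:ℂ) ‖D‖) (F := fun x => E x)
    (by fun_prop)
    (fun x y h => Subtype.ext (hinj (Metric.closedBall_subset_closedBall hD x.2)
      (Metric.closedBall_subset_closedBall hD y.2) h))
    (fun z => E 0 + exp (lam z)) (by fun_prop)
    (fun z => by
      obtain ⟨x, hx, hx'⟩ := hball (E 0 + exp (lam z)) (by simpa using hlamn z)
      exact ⟨⟨x, hx⟩, hx'⟩)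
  obtain ⟨M, hM, hM'⟩ := sur_exists_log (fun z => (G z : ℂ)) (by fun_prop)
    (by
      intro z h
      have := hG' z
      simp only [h] at this
      have h3 : exp (lam z) = 0 := by linear_combination -this
      exact exp_ne_zero _ h3)
  have hGper : ∀ z, (G (z + 2 * Real.pi * I) : ℂ) = G z := by
    intro z
    apply hinj (Metric.closedBall_subset_closedBall hD (G _).2)
      (Metric.closedBall_subset_closedBall hD (G _).2)
    rw [hG', hG']
    congr 1
    rw [show lam (z + 2 * Real.pi * I) = lam z + 2 * Real.pi * I by
      simp [lam]; ring]
    exact exp_periodic (lam z)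
  have hexpper : ∀ z, exp (M (z + 2 * Real.pi * I)) = exp (M z) := by
    intro z; rw [hM', hM', hGper]
  obtain ⟨k, hk⟩ := sur_exp_eq_re (hexpper 0)
  have hMper : ∀ z, M (z + 2 * Real.pi * I) = M z + k * (2 * Real.pi * I) := by
    intro z
    have := sur_log_unique (isPreconnected_univ (α := ℂ)) (L := fun z => M (z + 2 * Real.pi * I))
      (M := M) (by fun_prop) (by fun_prop) (fun θ _ => hexpper θ)
      (mem_univ z) (mem_univ 0)
    linear_combination this + hk
  have hP : Function.Periodic (fun z => M z - k * z) (2 * Real.pi * I) := by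
    intro z
    simp only [hMper]; ring
  -- a small loop
  obtain ⟨ε, hε, hε1, hεsmall⟩ : ∃ ε : ℝ, 0 < ε ∧ ε ≤ 1 ∧
      ∀ θ, ‖E (ε * (D * scirc θ)) - E 0‖ ≤ η/2 := by
    obtain ⟨δ, hδ, hδ'⟩ := Metric.continuous_iff.mp hc 0 (η/2) (by positivity)
    have hDp : 0 < ‖D‖ := norm_pos_iff.mpr hD0
    refine ⟨min 1 (δ / (2 * ‖D‖)), lt_min one_pos (by positivity), min_le_left _ _, fun θ => ?_⟩
    have hle : min 1 (δ / (2 * ‖D‖)) * ‖D‖ < δ := by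
      calc min 1 (δ / (2 * ‖D‖)) * ‖D‖ ≤ (δ / (2 * ‖D‖)) * ‖D‖ := by
            gcongr; exact min_le_right _ _
        _ = δ / 2 := by field_simp
        _ < δ := by linarith
    have h0 : 0 < min 1 (δ / (2 * ‖D‖)) := lt_min one_pos (by positivity)
    have := hδ' ((min 1 (δ / (2 * ‖D‖)) : ℝ) * (D * scirc θ)) (by
      rw [dist_zero_right, norm_mul, norm_mul, scirc_norm, mul_one, Complex.norm_real,
        Real.norm_eq_abs, abs_of_pos h0]
      exact hle)
    rw [dist_eq_norm] at this
    exact this.le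
  have hne : ∀ κ : ℝ, 0 < κ → κ ≤ 1 → ∀ θ, E (κ * (D * scirc θ)) - E 0 ≠ 0 := by
    intro κ h1 h2 t
    have := deg_ne hc hinj hD0 hD κ 0 (by rw [abs_of_pos h1]; exact h2) (by simp) h1.ne' t
    simpa using this
  have h1 := turn_homotopy (fun κ θ => E (((1 - κ) + κ * ε : ℝ) * (D * scirc θ)) - E 0)
    (by fun_prop)
    (by
      intro s hs t ht
      apply hne
      · nlinarith [hs.1, hs.2]
      · nlinarith [hs.1, hs.2])
    (by intro s hs; simp only [scirc_zero, scirc_one])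
  simp only [sub_zero, zero_mul, add_zero, ofReal_one, one_mul, sub_self, zero_add] at h1
  obtain ⟨L, hL, hL'⟩ := sur_log_line (fun θ : ℝ => E (ε * (D * scirc θ)) - E 0) (by fun_prop)
    (fun s _ => hne ε hε hε1 s)
  have h3 := turn_eq hL.continuousOn hL'
  rw [← h1, hj] at h3
  have hlamL : ∀ t ∈ Icc (0:ℝ) 1, lam (L t) = L t := by
    intro t ht
    have h4 : Real.exp (L t).re ≤ η/2 := by
      rw [← Complex.norm_exp, hL' t ht]; exact hεsmall t
    have h5 : (L t).re ≤ Real.log (η/2) := (Real.le_log_iff_exp_le (by positivity)).mpr h4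
    simp only [lam, min_eq_left h5, re_add_im]
  have hGL : ∀ t ∈ Icc (0:ℝ) 1, (G (L t) : ℂ) = ε * (D * scirc t) := by
    intro t ht
    apply hinj (Metric.closedBall_subset_closedBall hD (G _).2)
      (deg_mem hc hinj hD0 hD ε (by rw [abs_of_pos hε]; exact hε1) t)
    rw [hG', hlamL t ht, hL' t ht]
    ring
  have h6 : turn (fun θ => ε * (D * scirc θ)) = M (L 1) - M (L 0) :=
    turn_eq (L := fun t => M (L t)) (by fun_prop) (fun t ht => by rw [hM', hGL t ht])
  have hεD : (ε * D : ℂ) ≠ 0 := mul_ne_zero (by exact_mod_cast hε.ne') hD0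
  have h7 := turn_eq (φ := fun θ : ℝ => ε * (D * scirc θ))
    (L := fun t => log (ε * D) + 2 * Real.pi * I * t) (by fun_prop)
    (fun t ht => by rw [exp_add, exp_log hεD, scirc]; ring)
  have h8 := hP.int_mul o (L 0)
  rw [show L 0 + o * (2 * Real.pi * I) = L 1 by linear_combination h3] at h8
  have h9 : ((k * o : ℤ) : ℂ) * (2 * Real.pi * I) = (1:ℂ) * (2 * Real.pi * I) := by
    rw [h6] at h7
    push_cast at h7 ⊢
    linear_combination h7 - h8 + k * h3
  have h10 : ((k * o : ℤ) : ℂ) = 1 := mul_right_cancel₀ h2pi h9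
  have h11 : o * k = 1 := by rw [mul_comm]; exact_mod_cast h10
  rcases Int.eq_one_or_neg_one_of_mul_eq_one h11 with h | h
  · left; rw [hj, h]; simp
  · right; rw [hj, h]; simp

end

section
open Set Complex

/-- building block of the quasi-periodic function -/
noncomputable def hF (x r : ℝ) : ℂ :=
  exp (Real.pi * I * r - 2 * Real.pi * I * r * x) * ((1 - r) - r * exp (2 * Real.pi * I * x))

/-- a quasi-periodic function on the plane vanishing exactly on the lattice -/
noncomputable def hq (z : ℝ × ℝ) : ℂ := hF z.1 (Int.fract (z.2 + 1/2))

theorem hq_cont : Continuous hq := by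
  unfold hq
  apply ContinuousOn.comp_fract (s := fun z : ℝ × ℝ => z.2 + 1/2)
    (f := fun (z : ℝ × ℝ) (r : ℝ) => hF z.1 r)
  · apply Continuous.continuousOn
    unfold Function.uncurry hF
    fun_prop
  · fun_prop
  · intro z
    have h : exp (Real.pi * I - 2 * Real.pi * I * z.1) * exp (2 * Real.pi * I * z.1) = -1 := by
      rw [← exp_add, ← exp_pi_mul_I]; congr 1; ring
    simp only [hF]
    push_cast
    simp only [mul_zero, zero_mul, mul_one, sub_zero, sub_self, exp_zero, one_mul, zero_sub]
    rw [mul_neg, h]; ring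

theorem hq_zero {z : ℝ × ℝ} (h : hq z = 0) : ∃ m n : ℤ, z = ((m : ℝ), (n : ℝ)) := by
  unfold hq hF at h
  rw [mul_eq_zero] at h
  rcases h with h | h
  · exact absurd h (exp_ne_zero _)
  set r := Int.fract (z.2 + 1/2) with hr
  have h1 : (1 - r : ℂ) = r * exp (2 * Real.pi * I * z.1) := by linear_combination h
  have hn : ‖exp (2 * Real.pi * I * z.1)‖ = 1 := scirc_norm z.1
  have h2 := congrArg norm h1
  rw [norm_mul, hn, mul_one, show (1 - r : ℂ) = ((1 - r : ℝ) : ℂ) by push_cast; ring,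
    Complex.norm_real, Complex.norm_real, Real.norm_eq_abs, Real.norm_eq_abs,
    abs_of_nonneg (by linarith [Int.fract_lt_one (z.2 + 1/2)] : (0:ℝ) ≤ 1 - r),
    abs_of_nonneg (Int.fract_nonneg _ : (0:ℝ) ≤ r)] at h2
  have hr2 : r = 1/2 := by linarith
  have h3 : exp (2 * Real.pi * I * z.1) = 1 := by
    rw [hr2] at h1; push_cast at h1
    linear_combination -2 * h1
  rw [Complex.exp_eq_one_iff] at h3
  obtain ⟨m, hm⟩ := h3
  refine ⟨m, ⌊z.2 + 1/2⌋, Prod.ext ?_ ?_⟩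
  · have h4 : (z.1 : ℂ) = m := by
      apply mul_right_cancel₀ two_pi_I_ne_zero
      linear_combination hm
    exact_mod_cast h4
  · have := Int.floor_add_fract (z.2 + 1/2)
    simp only; linarith

theorem hq_add (z : ℝ × ℝ) (m n : ℤ) :
    hq (z + ((m : ℝ), (n : ℝ))) = exp (Real.pi * I * m - 2 * Real.pi * I * m * (z.2 + 1)) * hq z := by
  unfold hq hF
  simp only [Prod.fst_add, Prod.snd_add]
  rw [show z.2 + (n:ℝ) + 1/2 = z.2 + 1/2 + n by ring, Int.fract_add_intCast]
  have hfl := Int.floor_add_fract (z.2 + 1/2)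
  set r := Int.fract (z.2 + 1/2) with hr
  set j := ⌊z.2 + 1/2⌋ with hj
  have hz : (z.2 : ℂ) = j + r - 1/2 := by
    have : z.2 = j + r - 1/2 := by linarith
    rw [this]; push_cast; ring
  have e1 : exp (2 * Real.pi * I * ((z.1 + m : ℝ) : ℂ)) = exp (2 * Real.pi * I * z.1) := by
    rw [Complex.exp_eq_exp_iff_exists_int]
    exact ⟨m, by push_cast; ring⟩
  rw [e1, ← mul_assoc, ← exp_add]
  congr 1
  rw [Complex.exp_eq_exp_iff_exists_int]
  refine ⟨m * j, ?_⟩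
  rw [hz]
  push_cast; ring

theorem hq_neg (z : ℝ × ℝ) :
    hq (-z) = exp (Real.pi * I - 2 * Real.pi * I * z.2) * hq z := by
  unfold hq
  simp only [Prod.fst_neg, Prod.snd_neg]
  have hfl := Int.floor_add_fract (z.2 + 1/2)
  set r := Int.fract (z.2 + 1/2) with hr
  set j := ⌊z.2 + 1/2⌋ with hj
  have hz' : z.2 = j + r - 1/2 := by linarith
  have hz : (z.2 : ℂ) = j + r - 1/2 := by
    rw [hz']; push_cast; ring
  by_cases h0 : r = 0
  · rw [show -z.2 + 1/2 = ((1 - j : ℤ) : ℝ) by rw [hz', h0]; push_cast; ring, Int.fract_intCast, h0,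
      hz, h0]
    unfold hF
    push_cast
    simp only [mul_zero, zero_mul, sub_zero, exp_zero, mul_one]
    symm
    rw [Complex.exp_eq_one_iff]
    exact ⟨1 - j, by push_cast; ring⟩
  · have hfr : Int.fract (-z.2 + 1/2) = 1 - r := by
      rw [Int.fract_eq_iff]
      have h1 : 0 ≤ r := Int.fract_nonneg _
      have h2 : r < 1 := Int.fract_lt_one _
      refine ⟨by linarith, ?_, -j, ?_⟩
      · have : 0 < r := lt_of_le_of_ne h1 (Ne.symm h0)
        linarith
      · rw [hz']; push_cast; ring
    rw [hfr]
    unfold hF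
    have e1 : exp (2 * Real.pi * I * ((-z.1 : ℝ) : ℂ)) * exp (2 * Real.pi * I * z.1) = 1 := by
      rw [← exp_add, Complex.exp_eq_one_iff]; exact ⟨0, by push_cast; ring⟩
    have e2 : exp (Real.pi * I * ((1 - r : ℝ) : ℂ) - 2 * Real.pi * I * ((1 - r : ℝ) : ℂ) *
        ((-z.1 : ℝ) : ℂ)) = - exp (Real.pi * I - 2 * Real.pi * I * z.2) *
        exp (Real.pi * I * r - 2 * Real.pi * I * r * z.1) * exp (2 * Real.pi * I * z.1) := by
      rw [show ∀ x : ℂ, -x = exp (Real.pi * I) * x by intro x; rw [exp_pi_mul_I]; ring,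
        ← exp_add, ← exp_add, ← exp_add, Complex.exp_eq_exp_iff_exists_int]
      exact ⟨j - 1, by rw [hz]; push_cast; ring⟩
    rw [e2]
    push_cast at e1 ⊢
    linear_combination
      exp (Real.pi * I - 2 * Real.pi * I * z.2) *
        exp (Real.pi * I * r - 2 * Real.pi * I * r * z.1) * (1 - r) * e1

/-- local form near the origin -/
theorem hq_local {z : ℝ × ℝ} (h : |z.2| < 1/2) :
    hq z = exp (Real.pi * I * (z.2 + 1/2) - 2 * Real.pi * I * (z.2 + 1/2) * z.1
        + Real.pi * I * z.1 + Real.pi * I) *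
      (((2 * z.2 * Real.cos (Real.pi * z.1) : ℝ) : ℂ) + (Real.sin (Real.pi * z.1) : ℝ) * I) := by
  rw [abs_lt] at h
  unfold hq hF
  rw [Int.fract_eq_self.mpr ⟨by linarith, by linarith⟩, exp_add, exp_pi_mul_I, exp_add]
  have e1 : exp (2 * Real.pi * I * z.1) = exp (Real.pi * I * z.1) * exp (Real.pi * I * z.1) := by
    rw [← exp_add]; congr 1; ring
  have e2 : exp (Real.pi * I * z.1) = (Real.cos (Real.pi * z.1) : ℝ) + (Real.sin (Real.pi * z.1) : ℝ) * I := by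
    rw [show (Real.pi * I * z.1 : ℂ) = ((Real.pi * z.1 : ℝ) : ℂ) * I by push_cast; ring, exp_mul_I]
    simp
  have e3 : ((Real.cos (Real.pi * z.1) : ℝ) : ℂ)^2 + ((Real.sin (Real.pi * z.1) : ℝ) : ℂ)^2 = 1 := by
    exact_mod_cast Real.cos_sq_add_sin_sq _
  rw [e1, e2]
  push_cast at e3 ⊢
  generalize cos (Real.pi * z.1) = c at e3 ⊢
  generalize sin (Real.pi * z.1) = s at e3 ⊢
  have hI : I^2 = -1 := I_sq
  have key : ((1:ℂ) - (z.2 + 1/2)) - (z.2 + 1/2) * ((c + s * I) * (c + s * I)) =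
      - ((c + s * I) * (2 * z.2 * c + s * I)) := by
    linear_combination (-(1/2) + (z.2:ℂ)) * e3 + (1/2 - (z.2:ℂ)) * s^2 * hI
  rw [key]
  ring

end

section
open Set Complex

theorem turn_hq_add {γ : ℝ → ℝ × ℝ} (hγ : Continuous γ) (h0 : ∀ t ∈ Icc (0:ℝ) 1, hq (γ t) ≠ 0)
    (m n : ℤ) : turn (fun t => hq (γ t + ((m:ℝ), (n:ℝ)))) =
      turn (fun t => hq (γ t)) - 2 * Real.pi * I * m * ((γ 1).2 - (γ 0).2) := by
  rw [turn_mul_exp (φ' := fun t => hq (γ t))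
    (ψ := fun t => Real.pi * I * m - 2 * Real.pi * I * m * ((γ t).2 + 1))
    (hq_cont.comp hγ).continuousOn h0 (by fun_prop) (fun t _ => hq_add _ _ _)]
  ring

theorem turn_hq_neg {γ : ℝ → ℝ × ℝ} (hγ : Continuous γ) (h0 : ∀ t ∈ Icc (0:ℝ) 1, hq (γ t) ≠ 0) :
    turn (fun t => hq (-(γ t))) =
      turn (fun t => hq (γ t)) - 2 * Real.pi * I * ((γ 1).2 - (γ 0).2) := by
  rw [turn_mul_exp (φ' := fun t => hq (γ t))
    (ψ := fun t => Real.pi * I - 2 * Real.pi * I * (γ t).2)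
    (hq_cont.comp hγ).continuousOn h0 (by fun_prop) (fun t _ => hq_neg _)]
  ring

theorem hq_neg_ne {z : ℝ × ℝ} (h : hq z ≠ 0) : hq (-z) ≠ 0 := by
  rw [hq_neg]; exact mul_ne_zero (exp_ne_zero _) h

theorem turn_hq_neg_add {γ : ℝ → ℝ × ℝ} (hγ : Continuous γ)
    (h0 : ∀ t ∈ Icc (0:ℝ) 1, hq (γ t) ≠ 0) (m n : ℤ) :
    turn (fun t => hq (-(γ t) + ((m:ℝ), (n:ℝ)))) =
      turn (fun t => hq (γ t)) + 2 * Real.pi * I * (m - 1) * ((γ 1).2 - (γ 0).2) := by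
  rw [turn_hq_add (γ := fun t => -(γ t)) hγ.neg (fun t ht => hq_neg_ne (h0 t ht)),
    turn_hq_neg hγ h0]
  simp only [Prod.snd_neg]; push_cast; ring

theorem core_identity {A1 A2 δ δ' : ℝ → ℝ × ℝ} (hA1 : Continuous A1) (hA2 : Continuous A2)
    (hδ : Continuous δ) (hδ' : Continuous δ') (n1 n2 v1 v2 : ℤ)
    (e1 : A1 0 = δ' 0) (e2 : A1 1 = δ' 1 + ((n1:ℝ), (n2:ℝ)))
    (e3 : A2 0 = δ 1 + ((n1:ℝ), (n2:ℝ))) (e4 : A2 1 = δ 0 + ((v1:ℝ), (v2:ℝ)))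
    (h1 : ∀ s ∈ Icc (0:ℝ) 1, ∀ t ∈ Icc (0:ℝ) 1, hq (A1 s - δ t) ≠ 0)
    (h2 : ∀ s ∈ Icc (0:ℝ) 1, ∀ t ∈ Icc (0:ℝ) 1, hq (A2 s - δ' t) ≠ 0)
    (h3 : ∀ s ∈ Icc (0:ℝ) 1, ∀ t ∈ Icc (0:ℝ) 1, hq (A2 s - A1 t) ≠ 0)
    (k2 : ∀ t ∈ Icc (0:ℝ) 1, hq (δ' 1 - δ t) ≠ 0)
    (k3 : ∀ t ∈ Icc (0:ℝ) 1, hq (δ' t - δ 0) ≠ 0) (k4 : ∀ t ∈ Icc (0:ℝ) 1, hq (δ' t - δ 1) ≠ 0) :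
    turn (fun t => hq (δ' 0 - δ t)) - turn (fun t => hq (δ' 1 - δ t))
      + turn (fun t => hq (δ' t - δ 1)) - turn (fun t => hq (δ' t - δ 0))
      = 2 * Real.pi * I * (n1 * v2 - n2 * v1) := by
  have hcq := hq_cont
  have RA := turn_rect (fun s t => hq (A1 s - δ t)) (by fun_prop) h1
  have RB := turn_rect (fun s t => hq (A2 s - δ' t)) (by fun_prop) h2
  have RC := turn_rect (fun s t => hq (A2 s - A1 t)) (by fun_prop) h3
  have a1 : turn (fun t => hq (A1 1 - δ t)) = turn (fun t => hq (δ' 1 - δ t))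
      - 2 * Real.pi * I * n1 * ((δ' 1 - δ 1).2 - (δ' 1 - δ 0).2 : ℝ) := by
    rw [turn_congr (ψ := fun t => hq ((δ' 1 - δ t) + ((n1:ℝ), (n2:ℝ)))),
      turn_hq_add (γ := fun t => δ' 1 - δ t) (by fun_prop) k2]
    · push_cast; rfl
    · intro t _; rw [e2]; congr 1; abel
  have b1 : turn (fun t => hq (A2 1 - δ' t)) = turn (fun t => hq (δ' t - δ 0))
      + 2 * Real.pi * I * (v1 - 1) * ((δ' 1 - δ 0).2 - (δ' 0 - δ 0).2 : ℝ) := by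
    rw [turn_congr (ψ := fun t => hq (-(δ' t - δ 0) + ((v1:ℝ), (v2:ℝ)))),
      turn_hq_neg_add (γ := fun t => δ' t - δ 0) (by fun_prop) k3]
    · push_cast; rfl
    · intro t _; rw [e4]; congr 1; abel
  have b2 : turn (fun t => hq (A2 0 - δ' t)) = turn (fun t => hq (δ' t - δ 1))
      + 2 * Real.pi * I * (n1 - 1) * ((δ' 1 - δ 1).2 - (δ' 0 - δ 1).2 : ℝ) := by
    rw [turn_congr (ψ := fun t => hq (-(δ' t - δ 1) + ((n1:ℝ), (n2:ℝ)))),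
      turn_hq_neg_add (γ := fun t => δ' t - δ 1) (by fun_prop) k4]
    · push_cast; rfl
    · intro t _; rw [e3]; congr 1; abel
  have c1 : turn (fun t => hq (A2 1 - A1 t)) = turn (fun t => hq (A1 t - δ 0))
      + 2 * Real.pi * I * (v1 - 1) * ((A1 1 - δ 0).2 - (A1 0 - δ 0).2 : ℝ) := by
    rw [turn_congr (ψ := fun t => hq (-(A1 t - δ 0) + ((v1:ℝ), (v2:ℝ)))),
      turn_hq_neg_add (γ := fun t => A1 t - δ 0) (by fun_prop) (fun t ht => h1 t ht 0 s0mem)]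
    · push_cast; rfl
    · intro t _; rw [e4]; congr 1; abel
  have c2 : turn (fun t => hq (A2 0 - A1 t)) = turn (fun t => hq (A1 t - δ 1))
      + 2 * Real.pi * I * (n1 - 1) * ((A1 1 - δ 1).2 - (A1 0 - δ 1).2 : ℝ) := by
    rw [turn_congr (ψ := fun t => hq (-(A1 t - δ 1) + ((n1:ℝ), (n2:ℝ)))),
      turn_hq_neg_add (γ := fun t => A1 t - δ 1) (by fun_prop) (fun t ht => h1 t ht 1 s1mem)]
    · push_cast; rfl
    · intro t _; rw [e3]; congr 1; abel
  have c3 : turn (fun t => hq (A2 t - A1 1)) = turn (fun t => hq (A2 t - δ' 1))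
      - 2 * Real.pi * I * (-n1) * ((A2 1 - δ' 1).2 - (A2 0 - δ' 1).2 : ℝ) := by
    rw [turn_congr (ψ := fun t => hq ((A2 t - δ' 1) + (((-n1 : ℤ):ℝ), ((-n2 : ℤ):ℝ)))),
      turn_hq_add (γ := fun t => A2 t - δ' 1) (by fun_prop) (fun t ht => h2 t ht 1 s1mem)]
    · push_cast; rfl
    · intro t _; rw [e2]; congr 1
      ext <;> simp <;> ring
  simp only [a1, b1, b2, c1, c2, c3] at RA RB RC
  simp only [e1, e2, e3, e4, Prod.snd_sub, Prod.snd_add] at RA RB RC ⊢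
  push_cast at RA RB RC ⊢
  linear_combination -RA - RB + RC

end

section
open Set Complex

theorem turn_rev {φ : ℝ → ℂ} (hc : ContinuousOn φ (Icc 0 1)) (h0 : ∀ t ∈ Icc (0:ℝ) 1, φ t ≠ 0) :
    turn (fun t => φ (1 - t)) = - turn φ := by
  obtain ⟨L, hL, hL'⟩ := sur_log_line φ hc h0
  rw [turn_eq hL.continuousOn hL', turn_eq (L := fun t => L (1 - t)) (by fun_prop)
    (fun t ht => hL' (1 - t) ⟨by linarith [ht.2], by linarith [ht.1]⟩)]
  simp

theorem turn_four {φ : ℝ → ℂ} (hc : ContinuousOn φ (Icc 0 1)) (h0 : ∀ t ∈ Icc (0:ℝ) 1, φ t ≠ 0) :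
    turn φ = turn (fun t => φ (t/4)) + turn (fun t => φ ((t+1)/4)) + turn (fun t => φ ((t+2)/4))
      + turn (fun t => φ ((t+3)/4)) := by
  obtain ⟨L, hL, hL'⟩ := sur_log_line φ hc h0
  rw [turn_eq hL.continuousOn hL', turn_eq (L := fun t => L (t/4)) (by fun_prop)
    (fun t ht => hL' _ ⟨by linarith [ht.1], by linarith [ht.2]⟩),
    turn_eq (L := fun t => L ((t+1)/4)) (by fun_prop)
    (fun t ht => hL' _ ⟨by linarith [ht.1], by linarith [ht.2]⟩),
    turn_eq (L := fun t => L ((t+2)/4)) (by fun_prop)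
    (fun t ht => hL' _ ⟨by linarith [ht.1], by linarith [ht.2]⟩),
    turn_eq (L := fun t => L ((t+3)/4)) (by fun_prop)
    (fun t ht => hL' _ ⟨by linarith [ht.1], by linarith [ht.2]⟩)]
  norm_num

/-- interpolation between a side of the square and an arc of a circle -/
noncomputable def sQ (m r t : ℝ) : ℂ :=
  (1 - r) * (1/2 + (t - 1/2) * I) + r * (m * scirc ((t - 1/2)/4))

theorem scirc_re (θ : ℝ) : (scirc θ).re = Real.cos (2 * Real.pi * θ) := by
  unfold scirc
  rw [show (2 * Real.pi * I * θ : ℂ) = ((2 * Real.pi * θ : ℝ) : ℂ) * I by push_cast; ring]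
  exact exp_ofReal_mul_I_re _

theorem scirc_im (θ : ℝ) : (scirc θ).im = Real.sin (2 * Real.pi * θ) := by
  unfold scirc
  rw [show (2 * Real.pi * I * θ : ℂ) = ((2 * Real.pi * θ : ℝ) : ℂ) * I by push_cast; ring]
  exact exp_ofReal_mul_I_im _

theorem scirc_add (x y : ℝ) : scirc (x + y) = scirc x * scirc y := by
  unfold scirc; rw [← exp_add]; congr 1; push_cast; ring

theorem scirc_quarter : scirc (1/4) = I := by
  apply Complex.ext
  · rw [scirc_re, show 2 * Real.pi * (1/4) = Real.pi/2 by ring]; simp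
  · rw [scirc_im, show 2 * Real.pi * (1/4) = Real.pi/2 by ring]; simp

theorem sQ_re (m r t : ℝ) : (sQ m r t).re = (1 - r) * (1/2) + r * (m * (scirc ((t-1/2)/4)).re) := by
  simp [sQ]
theorem sQ_im (m r t : ℝ) : (sQ m r t).im = (1 - r) * (t - 1/2) + r * (m * (scirc ((t-1/2)/4)).im) := by
  simp [sQ]

theorem sQ_bd {m : ℝ} (hm : 0 < m) (hm2 : m ≤ 1/2) {r t : ℝ} (hr : r ∈ Icc (0:ℝ) 1)
    (ht : t ∈ Icc (0:ℝ) 1) : 0 < (sQ m r t).re ∧ |(sQ m r t).re| ≤ 1/2 ∧ |(sQ m r t).im| ≤ 1/2 := by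
  rw [sQ_re, sQ_im]
  have h1 : 0 < (scirc ((t-1/2)/4)).re := by
    rw [scirc_re]
    apply Real.cos_pos_of_mem_Ioo
    constructor <;> nlinarith [Real.pi_pos, ht.1, ht.2]
  have h2 : (scirc ((t-1/2)/4)).re ≤ 1 := by rw [scirc_re]; exact Real.cos_le_one _
  have h3 : |(scirc ((t-1/2)/4)).im| ≤ 1 := by rw [scirc_im]; exact Real.abs_sin_le_one _
  obtain ⟨r0, r1⟩ := hr
  obtain ⟨t0, t1⟩ := ht
  rw [abs_le] at h3
  set x := (scirc ((t-1/2)/4)).re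
  set y := (scirc ((t-1/2)/4)).im
  have hx : 0 < m * x := mul_pos hm h1
  have hx2 : m * x ≤ 1/2 := by nlinarith
  have hy : m * y ≤ 1/2 := by nlinarith
  have hy2 : -(1/2) ≤ m * y := by nlinarith
  have hp : 0 < (1 - r) * (1/2) + r * (m * x) := by
    rcases eq_or_lt_of_le r0 with h | h
    · rw [← h]; norm_num
    · have := mul_pos h hx; nlinarith
  refine ⟨hp, ?_, ?_⟩
  · rw [abs_of_pos hp]; nlinarith
  · rw [abs_le]; constructor <;> nlinarith

theorem turn_square {G : ℂ → ℂ} (hG : Continuous G)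
    (h0 : ∀ z : ℂ, |z.re| ≤ 1/2 → |z.im| ≤ 1/2 → z ≠ 0 → G z ≠ 0) {m : ℝ} (hm : 0 < m)
    (hm2 : m ≤ 1/2) :
    turn (fun θ => G (m * scirc (-1/8) * scirc θ)) =
      turn (fun t => G (1/2 + (t - 1/2) * I)) - turn (fun t => G ((t - 1/2) + 1/2 * I))
      - turn (fun t => G (-1/2 + (t - 1/2) * I)) + turn (fun t => G ((t - 1/2) - 1/2 * I)) := by
  have hsc := scirc_cont
  have hQ : Continuous (fun p : ℝ × ℝ => sQ m p.1 p.2) := by unfold sQ; fun_prop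
  have key : ∀ c : ℂ, (c = 1 ∨ c = I ∨ c = -1 ∨ c = -I) →
      turn (fun r => G (c * sQ m r 0)) + turn (fun t => G (c * (m * scirc ((t - 1/2)/4)))) =
      turn (fun t => G (c * (1/2 + (t - 1/2) * I))) + turn (fun r => G (c * I * sQ m r 0)) := by
    intro c hc
    have := turn_rect (fun r t => G (c * sQ m r t)) (by fun_prop) (by
      intro r hr t ht
      obtain ⟨q1, q2, q3⟩ := sQ_bd hm hm2 hr ht
      have hne : sQ m r t ≠ 0 := by intro h; rw [h] at q1; simp at q1
      apply h0
      · rcases hc with rfl | rfl | rfl | rfl <;> simp <;> linarith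
      · rcases hc with rfl | rfl | rfl | rfl <;> simp <;> linarith
      · rcases hc with rfl | rfl | rfl | rfl <;> simpa)
    have e1 : ∀ r, sQ m r 1 = I * sQ m r 0 := by
      intro r
      unfold sQ
      rw [show ((1:ℝ) - 1/2)/4 = (0-1/2)/4 + 1/4 by norm_num, scirc_add, scirc_quarter]
      push_cast
      linear_combination (-(1-(r:ℂ)) * (0 - 1/2)) * I_sq
    simp only [e1] at this
    simpa [sQ, mul_assoc] using this
  have k1 := key 1 (by simp)
  have k2 := key I (by simp)
  have k3 := key (-1) (by simp)
  have k4 := key (-I) (by simp)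
  simp only [one_mul, I_mul_I, neg_mul, neg_neg] at k1 k2 k3 k4
  have hDne : ∀ θ, (m * scirc (-1/8) * scirc θ : ℂ) ≠ 0 := by
    intro θ
    have := scirc_ne θ; have := scirc_ne (-1/8)
    have : (m:ℂ) ≠ 0 := by exact_mod_cast hm.ne'
    simp_all
  have hDn : ∀ θ, ‖(m * scirc (-1/8) * scirc θ : ℂ)‖ ≤ 1/2 := by
    intro θ
    rw [norm_mul, norm_mul, scirc_norm, scirc_norm, Complex.norm_real, Real.norm_eq_abs,
      abs_of_pos hm]; linarith
  rw [turn_four (by fun_prop) (fun t _ => h0 _ ((abs_re_le_norm _).trans (hDn t))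
    ((abs_im_le_norm _).trans (hDn t)) (hDne t))]
  have a1 : ∀ t : ℝ, (m * scirc (-1/8) * scirc (t/4) : ℂ) = m * scirc ((t - 1/2)/4) := by
    intro t; rw [mul_assoc, ← scirc_add]; congr 2; ring
  have a2 : ∀ t : ℝ, (m * scirc (-1/8) * scirc ((t+1)/4) : ℂ) = I * (m * scirc ((t - 1/2)/4)) := by
    intro t; rw [← a1, show (t+1)/4 = t/4+1/4 by ring, scirc_add, scirc_quarter]; ring
  have a3 : ∀ t : ℝ, (m * scirc (-1/8) * scirc ((t+2)/4) : ℂ) = -(m * scirc ((t - 1/2)/4)) := by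
    intro t; rw [← a1, show (t+2)/4 = t/4+1/4+1/4 by ring, scirc_add, scirc_add, scirc_quarter]
    linear_combination (m * scirc (-1/8) * scirc (t/4) : ℂ) * I_sq
  have a4 : ∀ t : ℝ, (m * scirc (-1/8) * scirc ((t+3)/4) : ℂ) = -(I * (m * scirc ((t - 1/2)/4))) := by
    intro t; rw [← a2, show (t+3)/4 = (t+1)/4+1/4+1/4 by ring, scirc_add, scirc_add, scirc_quarter]
    linear_combination (m * scirc (-1/8) * scirc ((t+1)/4) : ℂ) * I_sq
  simp only [a2, a3, a4]
  simp only [a1]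
  have b2 : turn (fun t : ℝ => G (I * (1/2 + (t - 1/2) * I))) =
      - turn (fun t : ℝ => G ((t - 1/2) + 1/2 * I)) := by
    rw [← turn_rev (by fun_prop)]
    · congr 1; ext t; congr 1; push_cast; linear_combination ((t:ℂ) - 1/2) * I_sq
    · intro t ht; apply h0
      · simp; rw [abs_le]; constructor <;> linarith [ht.1, ht.2]
      · simp
      · intro h; have := congrArg im h; simp at this
  have b3 : turn (fun t : ℝ => G (-(1/2 + (t - 1/2) * I))) =
      - turn (fun t : ℝ => G (-1/2 + (t - 1/2) * I)) := by
    rw [← turn_rev (by fun_prop)]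
    · congr 1; ext t; congr 1; push_cast; ring
    · intro t ht; apply h0
      · simp; norm_num
      · simp; rw [abs_le]; constructor <;> linarith [ht.1, ht.2]
      · intro h; have := congrArg re h; simp at this
  have b4 : turn (fun t : ℝ => G (-(I * (1/2 + (t - 1/2) * I)))) =
      turn (fun t : ℝ => G ((t - 1/2) - 1/2 * I)) := by
    congr 1; ext t; congr 1; linear_combination -((t:ℂ) - 1/2) * I_sq
  rw [b2] at k2
  rw [b3] at k3
  rw [b4] at k4
  linear_combination k1 + k2 + k3 + k4

/-- identification of the plane with `ℂ` -/
noncomputable def toC (z : ℝ × ℝ) : ℂ := (z.2 : ℂ) + (z.1 : ℂ) * I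

theorem toC_cont : Continuous toC := by unfold toC; fun_prop
theorem toC_sub (a b : ℝ × ℝ) : toC (a - b) = toC a - toC b := by
  unfold toC; push_cast [Prod.fst_sub, Prod.snd_sub]; ring
theorem toC_re (a : ℝ × ℝ) : (toC a).re = a.2 := by simp [toC]
theorem toC_im (a : ℝ × ℝ) : (toC a).im = a.1 := by simp [toC]

/-- near the origin, `hq` turns like the identity -/
theorem turn_hq_local {u : ℝ → ℝ × ℝ} (hu : Continuous u) (h01 : u 0 = u 1)
    (h1 : ∀ t, |(u t).1| < 1/2) (h2 : ∀ t, |(u t).2| < 1/2) (h0 : ∀ t, u t ≠ 0) :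
    turn (fun t => hq (u t)) = turn (fun t => toC (u t)) := by
  have hcos : ∀ t, 0 < Real.cos (Real.pi * (u t).1) := by
    intro t
    have := abs_lt.1 (h1 t)
    apply Real.cos_pos_of_mem_Ioo
    constructor <;> nlinarith [Real.pi_pos]
  have hne : ∀ κ ∈ Icc (0:ℝ) 1, ∀ t,
      ((((1 - κ) * (2 * (u t).2 * Real.cos (Real.pi * (u t).1)) + κ * (u t).2 : ℝ) : ℂ)
        + (((1 - κ) * Real.sin (Real.pi * (u t).1) + κ * (u t).1 : ℝ) : ℂ) * I) ≠ 0 := by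
    intro κ hκ t h
    have hre := congrArg re h
    have him := congrArg im h
    simp only [add_re, ofReal_re, mul_re, I_re, mul_zero, ofReal_im, I_im, zero_re, zero_mul,
      sub_self, add_zero, add_im, mul_im, mul_one, zero_im, zero_add] at hre him
    have hc := hcos t
    have hb := abs_lt.1 (h1 t)
    obtain ⟨k0, k1⟩ := hκ
    apply h0 t
    have e2 : (u t).2 = 0 := by
      have : (u t).2 * ((1 - κ) * (2 * Real.cos (Real.pi * (u t).1)) + κ) = 0 := by
        linear_combination hre
      rcases mul_eq_zero.1 this with h | h
      · exact h
      · exfalso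
        rcases eq_or_lt_of_le k0 with h' | h'
        · rw [← h'] at h; linarith
        · have : 0 ≤ (1 - κ) * (2 * Real.cos (Real.pi * (u t).1)) :=
            mul_nonneg (by linarith) (by linarith)
          linarith
    have e1 : (u t).1 = 0 := by
      by_contra hx
      rcases lt_or_gt_of_ne hx with hx | hx
      · have hs : Real.sin (Real.pi * (u t).1) < 0 :=
          Real.sin_neg_of_neg_of_neg_pi_lt (by nlinarith [Real.pi_pos]) (by nlinarith [Real.pi_pos])
        rcases eq_or_lt_of_le k0 with h' | h'
        · rw [← h'] at him; linarith
        · nlinarith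
      · have hs : 0 < Real.sin (Real.pi * (u t).1) :=
          Real.sin_pos_of_pos_of_lt_pi (by nlinarith [Real.pi_pos]) (by nlinarith [Real.pi_pos])
        rcases eq_or_lt_of_le k0 with h' | h'
        · rw [← h'] at him; linarith
        · nlinarith
    exact Prod.ext e1 e2
  have hom := turn_homotopy (fun κ t =>
      ((((1 - κ) * (2 * (u t).2 * Real.cos (Real.pi * (u t).1)) + κ * (u t).2 : ℝ) : ℂ)
        + (((1 - κ) * Real.sin (Real.pi * (u t).1) + κ * (u t).1 : ℝ) : ℂ) * I))
      (by fun_prop) (fun κ hκ t _ => hne κ hκ t) (by intro κ _; simp only [h01])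
  have hloc := turn_mul_exp (φ := fun t => hq (u t))
    (φ' := fun t => ((2 * (u t).2 * Real.cos (Real.pi * (u t).1) : ℝ) : ℂ)
      + (Real.sin (Real.pi * (u t).1) : ℝ) * I)
    (ψ := fun t => Real.pi * I * ((u t).2 + 1/2) - 2 * Real.pi * I * ((u t).2 + 1/2) * (u t).1
      + Real.pi * I * (u t).1 + Real.pi * I) (by fun_prop)
    (by intro t _; have := hne 0 s0mem t; simpa using this) (by fun_prop)
    (fun t _ => hq_local (h2 t))
  rw [hloc]
  simp only [h01, sub_self, add_zero]
  simp only [sub_zero, one_mul, zero_mul, add_zero, sub_self, zero_add] at hom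
  exact hom

theorem theta_pm {E : ℝ × ℝ → ℝ × ℝ} (hE : Continuous E)
    (hinj : ∀ p ∈ Icc (0:ℝ) 1 ×ˢ Icc (0:ℝ) 1, ∀ q ∈ Icc (0:ℝ) 1 ×ˢ Icc (0:ℝ) 1,
      p ≠ q → hq (E p - E q) ≠ 0) :
    turn (fun t => hq (E (0, 1) - E (t, t))) - turn (fun t => hq (E (1, 0) - E (t, t)))
      + turn (fun t => hq (E (t, 1 - t) - E (1, 1))) - turn (fun t => hq (E (t, 1 - t) - E (0, 0)))
      = 2 * Real.pi * I ∨
    turn (fun t => hq (E (0, 1) - E (t, t))) - turn (fun t => hq (E (1, 0) - E (t, t)))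
      + turn (fun t => hq (E (t, 1 - t) - E (1, 1))) - turn (fun t => hq (E (t, 1 - t) - E (0, 0)))
      = -(2 * Real.pi * I) := by
  have hcq := hq_cont
  have hsc := scirc_cont
  have htc := toC_cont
  set G : ℂ → ℂ := fun z => hq (E (1/2 + z.re, 1/2 - z.re) - E (1/2 + z.im, 1/2 + z.im)) with hGd
  have hG : Continuous G := by
    rw [hGd]; fun_prop
  set W : ℂ → ℝ × ℝ := fun z => E (1/2 + z.re - z.im, 1/2 - z.re - z.im) with hWd
  have hW : Continuous W := by rw [hWd]; fun_prop
  -- choose a small radius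
  obtain ⟨ε, hε, hεW⟩ := Metric.continuousAt_iff.1 (hW.continuousAt (x := 0)) (1/2) (by norm_num)
  set m := min (ε/2) (1/4) with hm
  have hm0 : 0 < m := by rw [hm]; positivity
  have hm1 : m ≤ 1/4 := min_le_right _ _
  have hm2 : m < ε := lt_of_le_of_lt (min_le_left _ _) (by linarith)
  set D : ℂ := m * scirc (-1/8) with hD
  have hDn : ‖D‖ = m := by
    rw [hD, norm_mul, scirc_norm, Complex.norm_real, Real.norm_eq_abs, abs_of_pos hm0, mul_one]
  have hD0 : D ≠ 0 := by rw [← norm_pos_iff, hDn]; exact hm0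
  have hzn : ∀ θ, ‖D * scirc θ‖ = m := by intro θ; rw [norm_mul, hDn, scirc_norm, mul_one]
  have hz0 : ∀ θ, D * scirc θ ≠ 0 := fun θ => mul_ne_zero hD0 (scirc_ne θ)
  have hsq := turn_square hG (by
    intro z h1 h2 h3
    rw [abs_le] at h1 h2
    apply hinj
    · exact ⟨⟨by simp only; linarith, by simp only; linarith⟩,
        ⟨by simp only; linarith, by simp only; linarith⟩⟩
    · exact ⟨⟨by simp only; linarith, by simp only; linarith⟩,
        ⟨by simp only; linarith, by simp only; linarith⟩⟩
    · intro h
      rw [Prod.ext_iff] at h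
      simp only at h
      apply h3
      apply Complex.ext
      · simp only [zero_re]; linarith [h.1, h.2]
      · simp only [zero_im]; linarith [h.1, h.2]) hm0 (by linarith)
  have g1 : ∀ t : ℝ, G (1/2 + (t - 1/2) * I) = hq (E (1, 0) - E (t, t)) := by
    intro t
    simp only [hGd]; norm_num
  have g2 : ∀ t : ℝ, G ((t - 1/2) + 1/2 * I) = hq (E (t, 1 - t) - E (1, 1)) := by
    intro t
    simp only [hGd]; norm_num; congr 4; ring
  have g3 : ∀ t : ℝ, G (-1/2 + (t - 1/2) * I) = hq (E (0, 1) - E (t, t)) := by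
    intro t
    simp only [hGd]; norm_num
  have g4 : ∀ t : ℝ, G ((t - 1/2) - 1/2 * I) = hq (E (t, 1 - t) - E (0, 0)) := by
    intro t
    simp only [hGd]; norm_num; congr 4; ring
  simp only [g1, g2, g3, g4] at hsq
  -- move the second point to the centre
  have hmove := turn_homotopy (fun κ θ =>
    hq (E (1/2 + (D * scirc θ).re - κ * (D * scirc θ).im, 1/2 - (D * scirc θ).re - κ * (D * scirc θ).im)
      - E (1/2 + (1 - κ) * (D * scirc θ).im, 1/2 + (1 - κ) * (D * scirc θ).im))) (by fun_prop) (by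
    intro κ hκ θ _
    have hr := (abs_re_le_norm (D * scirc θ)).trans (hzn θ).le
    have hi := (abs_im_le_norm (D * scirc θ)).trans (hzn θ).le
    have hne := hz0 θ
    set z := D * scirc θ
    have hk : |κ * z.im| ≤ m := by
      rw [abs_mul, abs_of_nonneg hκ.1]
      calc κ * |z.im| ≤ 1 * |z.im| := by gcongr; exact hκ.2
        _ ≤ m := by linarith
    have hk' : |(1 - κ) * z.im| ≤ m := by
      rw [abs_mul, abs_of_nonneg (by linarith [hκ.2] : 0 ≤ 1 - κ)]
      calc (1 - κ) * |z.im| ≤ 1 * |z.im| := by gcongr; linarith [hκ.1]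
        _ ≤ m := by linarith
    rw [abs_le] at hr hi hk hk'
    apply hinj
    · exact ⟨⟨by simp only; linarith, by simp only; linarith⟩,
        ⟨by simp only; linarith, by simp only; linarith⟩⟩
    · exact ⟨⟨by simp only; linarith, by simp only; linarith⟩,
        ⟨by simp only; linarith, by simp only; linarith⟩⟩
    · intro h
      rw [Prod.ext_iff] at h
      simp only at h
      apply hne
      apply Complex.ext
      · simp only [zero_re]; linarith [h.1, h.2]
      · simp only [zero_im]; linarith [h.1, h.2]) (by
    intro κ _; simp only [scirc_zero, scirc_one])
  have hm' : turn (fun θ => G (D * scirc θ)) = turn (fun θ => hq (W (D * scirc θ) - W 0)) := by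
    simp only [hGd, hWd]
    simp only [zero_mul, sub_zero, one_mul, sub_self, add_zero] at hmove
    simpa using hmove
  have hWinj : InjOn (fun z => toC (W z)) (Metric.closedBall 0 (1/4)) := by
    intro z hz z' hz' h
    by_contra hne
    simp only [Metric.mem_closedBall, dist_zero_right] at hz hz'
    have a1 := abs_le.1 ((abs_re_le_norm z).trans hz)
    have a2 := abs_le.1 ((abs_im_le_norm z).trans hz)
    have a3 := abs_le.1 ((abs_re_le_norm z').trans hz')
    have a4 := abs_le.1 ((abs_im_le_norm z').trans hz')
    have hWeq : W z = W z' := by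
      have hr := congrArg re h
      have hi := congrArg im h
      simp only [toC_re, toC_im] at hr hi
      exact Prod.ext hi hr
    have := hinj (1/2 + z.re - z.im, 1/2 - z.re - z.im)
      ⟨⟨by simp only; linarith, by simp only; linarith⟩,
        ⟨by simp only; linarith, by simp only; linarith⟩⟩
      (1/2 + z'.re - z'.im, 1/2 - z'.re - z'.im)
      ⟨⟨by simp only; linarith, by simp only; linarith⟩,
        ⟨by simp only; linarith, by simp only; linarith⟩⟩ (by
        intro h
        rw [Prod.ext_iff] at h
        simp only at h
        apply hne
        apply Complex.ext
        · linarith [h.1, h.2]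
        · linarith [h.1, h.2])
    apply this
    simp only [hWd] at hWeq
    rw [hWeq, sub_self]
    have := hq_local (z := 0) (by norm_num)
    rw [this]; simp
  have hdeg := deg_pm_one (E := fun z => toC (W z)) (htc.comp hW) hWinj hD0 (by rw [hDn]; exact hm1)
  have hsmall : ∀ θ, ‖W (D * scirc θ) - W 0‖ < 1/2 := by
    intro θ
    rw [← dist_eq_norm]
    apply hεW
    rw [dist_zero_right, hzn]; exact hm2
  have hl := turn_hq_local (u := fun θ => W (D * scirc θ) - W 0) (by fun_prop)
    (by simp only [scirc_zero, scirc_one])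
    (fun t => lt_of_le_of_lt (norm_fst_le (W (D * scirc t) - W 0)) (hsmall t))
    (fun t => lt_of_le_of_lt (norm_snd_le (W (D * scirc t) - W 0)) (hsmall t))
    (by
      intro t h
      apply hz0 t
      apply hWinj
      · simp only [Metric.mem_closedBall, dist_zero_right, hzn]; exact hm1
      · simp
      · simp only [sub_eq_zero.1 h])
  simp only [toC_sub] at hl
  rw [← hl, ← hm', hsq] at hdeg
  rcases hdeg with h | h
  · right; linear_combination -h
  · left; linear_combination -h

end

section
open Set Complex

theorem coe_eq_iff (x y : ℝ) : ((x : AddCircle (1:ℝ)) = (y : AddCircle (1:ℝ))) ↔ ∃ n : ℤ, y = x + n := by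
  rw [← sub_eq_zero, ← AddCircle.coe_sub, AddCircle.coe_eq_zero_iff]
  constructor
  · rintro ⟨n, hn⟩
    exact ⟨-n, by simp at hn; push_cast; linarith⟩
  · rintro ⟨n, hn⟩
    exact ⟨-n, by simp; linarith⟩

theorem mk_eq_iff (p q : ℝ × ℝ) : torusMk p = torusMk q ↔ ∃ m n : ℤ, q = p + ((m:ℝ), (n:ℝ)) := by
  have : torusMk p = torusMk q ↔ ((p.1 : AddCircle (1:ℝ)) = (q.1 : AddCircle (1:ℝ))) ∧
      ((p.2 : AddCircle (1:ℝ)) = (q.2 : AddCircle (1:ℝ))) := by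
    exact Prod.ext_iff
  rw [this, coe_eq_iff, coe_eq_iff]
  constructor
  · rintro ⟨⟨m, hm⟩, n, hn⟩
    exact ⟨m, n, Prod.ext hm hn⟩
  · rintro ⟨m, n, h⟩
    rw [h]
    exact ⟨⟨m, rfl⟩, n, rfl⟩

theorem mk_cont : Continuous torusMk := by
  have : Continuous (fun v : ℝ × ℝ => ((v.1 : AddCircle (1:ℝ)), (v.2 : AddCircle (1:ℝ)))) :=
    ((AddCircle.continuous_mk' 1).comp continuous_fst).prodMk
      ((AddCircle.continuous_mk' 1).comp continuous_snd)
  exact this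

instance : T2Space Torus := inferInstanceAs (T2Space (AddCircle (1 : ℝ) × AddCircle (1 : ℝ)))

theorem circ_lift {A : Type*} [TopologicalSpace A] [SimplyConnectedSpace A]
    [LocallyPathConnectedSpace A] (φ : A → AddCircle (1:ℝ)) (hc : Continuous φ) :
    ∃ L : A → ℝ, Continuous L ∧ ∀ a, (L a : AddCircle (1:ℝ)) = φ a := by
  obtain ⟨a0⟩ : Nonempty A := inferInstance
  obtain ⟨e0, he0⟩ := QuotientAddGroup.mk_surjective (φ a0)
  obtain ⟨F, ⟨-, hF⟩, -⟩ := (AddCircle.isCoveringMap_coe (1:ℝ)).existsUnique_continuousMap_lifts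
    (⟨φ, hc⟩ : C(A, AddCircle (1:ℝ))) (a₀ := a0) (e₀ := e0) he0
  exact ⟨F, F.continuous, fun a => congrFun hF a⟩

theorem torus_lift (e : ℝ × ℝ → Torus) (he : Continuous e) :
    ∃ E : ℝ × ℝ → ℝ × ℝ, Continuous E ∧ ∀ p, torusMk (E p) = e p := by
  obtain ⟨L, hL, hL'⟩ := circ_lift (fun p : ℝ × ℝ => (e p).1)
    (continuous_fst.comp (X := ℝ × ℝ) (Y := AddCircle (1:ℝ) × AddCircle (1:ℝ)) he)
  obtain ⟨M, hM, hM'⟩ := circ_lift (fun p : ℝ × ℝ => (e p).2)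
    (continuous_snd.comp (X := ℝ × ℝ) (Y := AddCircle (1:ℝ) × AddCircle (1:ℝ)) he)
  exact ⟨fun p => (L p, M p), hL.prodMk hM, fun p => Prod.ext (hL' p) (hM' p)⟩

namespace TorusCurve

theorem per_int (C : TorusCurve) (x : ℝ) (n : ℤ) :
    C.f (x + n) = C.f x + (((n * C.p : ℤ) : ℝ), ((n * C.q : ℤ) : ℝ)) := by
  induction n using Int.induction_on with
  | zero => simp
  | succ i ih =>
    rw [show x + ((i + 1 : ℤ) : ℝ) = (x + (i:ℤ)) + 1 by push_cast; ring, C.per, ih]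
    ext <;> simp <;> ring
  | pred i ih =>
    have := C.per (x + ((-i - 1 : ℤ) : ℝ))
    rw [show x + ((-i - 1 : ℤ) : ℝ) + 1 = x + ((-i : ℤ) : ℝ) by push_cast; ring, ih] at this
    rw [← sub_eq_iff_eq_add] at this
    rw [← this]
    ext <;> simp <;> ring

theorem mk_per (C : TorusCurve) (x : ℝ) (n : ℤ) : torusMk (C.f (x + n)) = torusMk (C.f x) := by
  rw [eq_comm, mk_eq_iff]; exact ⟨_, _, C.per_int x n⟩

/-- paths inside the image of a curve factor through the curve -/
theorem path (C : TorusCurve) {γ : ℝ → ℝ × ℝ} (hγ : Continuous γ)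
    (h : ∀ t ∈ Icc (0:ℝ) 1, torusMk (γ t) ∈ C.image) :
    ∃ σ : ℝ → ℝ, ∃ m n : ℤ, Continuous σ ∧ ∀ t ∈ Icc (0:ℝ) 1, C.f (σ t) = γ t + ((m:ℝ), (n:ℝ)) := by
  have hsc := sclamp_cont
  have hfc := C.cont
  have hper : Function.Periodic (fun x => torusMk (C.f x)) 1 := by
    intro x
    have := C.mk_per x 1
    simpa using this
  obtain ⟨p, hp, hp'⟩ := sur_factor (K := AddCircle (1:ℝ)) (Y := Torus) (A := ℝ)
    (F := hper.lift) (by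
      rw [continuous_coinduced_dom]
      exact mk_cont.comp C.cont) (by
      intro x y hxy
      induction x using QuotientAddGroup.induction_on with | H x => ?_
      induction y using QuotientAddGroup.induction_on with | H y => ?_
      obtain ⟨n, hn⟩ := C.inj x y hxy
      exact (coe_eq_iff x y).2 ⟨n, hn⟩) (fun t => torusMk (γ (sclamp t)))
      (mk_cont.comp (hγ.comp sclamp_cont)) (by
      intro t
      obtain ⟨x, hx⟩ := h _ (sclamp_mem t)
      exact ⟨(x : AddCircle (1:ℝ)), hx⟩)
  obtain ⟨σ, hσ, hσ'⟩ := circ_lift p hp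
  have key : ∀ t, ∃ m n : ℤ, C.f (σ t) = γ (sclamp t) + ((m:ℝ), (n:ℝ)) := by
    intro t
    rw [← mk_eq_iff, ← hp', ← hσ']; rfl
  have c1 : ∀ t, (C.f (σ t) - γ (sclamp t)).1 = (C.f (σ 0) - γ (sclamp 0)).1 := fun t =>
    sur_int_const (isPreconnected_univ (α := ℝ)) (fun t => (C.f (σ t) - γ (sclamp t)).1)
      (by fun_prop) (fun a _ => by
        obtain ⟨m, n, h⟩ := key a; exact ⟨m, by simp [h]⟩) (mem_univ _) (mem_univ _)
  have c2 : ∀ t, (C.f (σ t) - γ (sclamp t)).2 = (C.f (σ 0) - γ (sclamp 0)).2 := fun t =>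
    sur_int_const (isPreconnected_univ (α := ℝ)) (fun t => (C.f (σ t) - γ (sclamp t)).2)
      (by fun_prop) (fun a _ => by
        obtain ⟨m, n, h⟩ := key a; exact ⟨n, by simp [h]⟩) (mem_univ _) (mem_univ _)
  obtain ⟨m, n, h0⟩ := key 0
  refine ⟨σ, m, n, hσ, fun t ht => ?_⟩
  have d1 := c1 t
  have d2 := c2 t
  rw [h0, sclamp_eq ht] at d1 d2
  simp only [Prod.fst_sub, Prod.snd_sub, Prod.fst_add, Prod.snd_add, add_sub_cancel_left] at d1 d2
  exact Prod.ext (by simp only [Prod.fst_add]; linarith) (by simp only [Prod.snd_add]; linarith)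

/-- if `f x = f y + k` then `k` is a multiple of the class -/
theorem mul_class (C : TorusCurve) {x y : ℝ} {m n : ℤ} (h : C.f y = C.f x + ((m:ℝ), (n:ℝ))) :
    ∃ k : ℤ, m = k * C.p ∧ n = k * C.q ∧ y = x + k := by
  obtain ⟨k, hk⟩ := C.inj x y ((mk_eq_iff _ _).2 ⟨m, n, h⟩)
  have := C.per_int x k
  rw [← hk, h] at this
  have := add_left_cancel this
  rw [Prod.ext_iff] at this
  simp only at this
  exact ⟨k, by exact_mod_cast this.1, by exact_mod_cast this.2, hk⟩

/-- transport of lifts along paths in the image -/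
theorem transport (C : TorusCurve) {γ : ℝ → ℝ × ℝ} (hγ : Continuous γ)
    (h : ∀ t ∈ Icc (0:ℝ) 1, torusMk (γ t) ∈ C.image) {m n : ℤ}
    (h0 : ∃ x, C.f x = γ 0 + ((m:ℝ), (n:ℝ))) : ∃ x, C.f x = γ 1 + ((m:ℝ), (n:ℝ)) := by
  obtain ⟨σ, m', n', hσ, hs⟩ := C.path hγ h
  obtain ⟨x, hx⟩ := h0
  have hs0 := hs 0 s0mem
  have hs1 := hs 1 s1mem
  have : C.f x = C.f (σ 0) + (((m - m' : ℤ):ℝ), ((n - n' : ℤ):ℝ)) := by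
    rw [hs0, hx]; ext <;> simp
  obtain ⟨k, k1, k2, -⟩ := C.mul_class this
  refine ⟨σ 1 + k, ?_⟩
  rw [C.per_int, ← k1, ← k2, hs1]
  ext <;> simp

end TorusCurve

end

section
open Set Complex

theorem sur_between {g : ℝ → ℝ} (hg : Continuous g)
    (h : ∀ t ∈ Icc (0:ℝ) 1, ∀ n : ℤ, g t ≠ n) {a : ℝ} (ha : a ∈ Icc (0:ℝ) 1) (h0 : 0 < g a)
    (h1 : g a < 1) {t : ℝ} (ht : t ∈ Icc (0:ℝ) 1) : 0 < g t ∧ g t < 1 := by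
  have hS := isPreconnected_Icc (a := (0:ℝ)) (b := 1)
  constructor
  · by_contra hlt
    push Not at hlt
    obtain ⟨c, hc, hc'⟩ := hS.intermediate_value ht ha hg.continuousOn ⟨hlt, h0.le⟩
    exact h c hc 0 (by simpa using hc')
  · by_contra hlt
    push Not at hlt
    obtain ⟨c, hc, hc'⟩ := hS.intermediate_value ha ht hg.continuousOn ⟨h1.le, hlt⟩
    exact h c hc 1 (by simpa using hc')

theorem core_pm {E : ℝ × ℝ → ℝ × ℝ} (hE : Continuous E)
    (hinj : ∀ p ∈ Icc (0:ℝ) 1 ×ˢ Icc (0:ℝ) 1, ∀ q ∈ Icc (0:ℝ) 1 ×ˢ Icc (0:ℝ) 1,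
      torusMk (E p) = torusMk (E q) → p = q)
    {A1 A2 : ℝ → ℝ × ℝ} (hA1 : Continuous A1) (hA2 : Continuous A2) (n1 n2 v1 v2 : ℤ)
    (e1 : A1 0 = E (0, 1)) (e2 : A1 1 = E (1, 0) + ((n1:ℝ), (n2:ℝ)))
    (e3 : A2 0 = E (1, 1) + ((n1:ℝ), (n2:ℝ))) (e4 : A2 1 = E (0, 0) + ((v1:ℝ), (v2:ℝ)))
    (h1 : ∀ s ∈ Icc (0:ℝ) 1, ∀ t ∈ Icc (0:ℝ) 1, torusMk (A1 s) ≠ torusMk (E (t, t)))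
    (h2 : ∀ s ∈ Icc (0:ℝ) 1, ∀ t ∈ Icc (0:ℝ) 1, torusMk (A2 s) ≠ torusMk (E (t, 1 - t)))
    (h3 : ∀ s ∈ Icc (0:ℝ) 1, ∀ t ∈ Icc (0:ℝ) 1, torusMk (A2 s) ≠ torusMk (A1 t)) :
    n1 * v2 - n2 * v1 = 1 ∨ n1 * v2 - n2 * v1 = -1 := by
  have conv : ∀ p q : ℝ × ℝ, torusMk p ≠ torusMk q → hq (p - q) ≠ 0 := by
    intro p q h h'
    obtain ⟨m, n, hmn⟩ := hq_zero h'
    apply h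
    rw [eq_comm, mk_eq_iff]
    exact ⟨m, n, by rw [← hmn]; abel⟩
  have hinj' : ∀ p ∈ Icc (0:ℝ) 1 ×ˢ Icc (0:ℝ) 1, ∀ q ∈ Icc (0:ℝ) 1 ×ˢ Icc (0:ℝ) 1,
      p ≠ q → hq (E p - E q) ≠ 0 := fun p hp q hq hne => conv _ _ (fun h => hne (hinj p hp q hq h))
  have hI : ∀ t ∈ Icc (0:ℝ) 1, 1 - t ∈ Icc (0:ℝ) 1 := fun t ht =>
    ⟨by linarith [ht.2], by linarith [ht.1]⟩
  have C := core_identity (A1 := A1) (A2 := A2) (δ := fun t => E (t, t)) (δ' := fun t => E (t, 1 - t))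
    hA1 hA2 (by fun_prop) (by fun_prop) n1 n2 v1 v2 (by simpa using e1) (by simpa using e2)
    e3 e4 (fun s hs t ht => conv _ _ (h1 s hs t ht)) (fun s hs t ht => conv _ _ (h2 s hs t ht))
    (fun s hs t ht => conv _ _ (h3 s hs t ht))
    (fun t ht => hinj' _ ⟨s1mem, hI 1 s1mem⟩ _ ⟨ht, ht⟩ (by
      intro h; rw [Prod.ext_iff] at h; simp only at h; linarith [h.1, h.2]))
    (fun t ht => hinj' _ ⟨ht, hI t ht⟩ _ ⟨s0mem, s0mem⟩ (by
      intro h; rw [Prod.ext_iff] at h; simp only at h; linarith [h.1, h.2]))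
    (fun t ht => hinj' _ ⟨ht, hI t ht⟩ _ ⟨s1mem, s1mem⟩ (by
      intro h; rw [Prod.ext_iff] at h; simp only at h; linarith [h.1, h.2]))
  have T := theta_pm hE hinj'
  simp only [sub_zero, sub_self] at C
  rw [C] at T
  have hpi := two_pi_I_ne_zero
  rcases T with h | h
  · left
    have : (n1 * v2 - n2 * v1 : ℂ) = 1 := by
      apply mul_left_cancel₀ hpi; rw [h, mul_one]
    exact_mod_cast this
  · right
    have : (n1 * v2 - n2 * v1 : ℂ) = -1 := by
      apply mul_left_cancel₀ hpi; rw [h]; ring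
    exact_mod_cast this

theorem arith_final {n1 n2 v1 v2 w1 w2 m : ℤ} (hv : IsCoprime v1 v2)
    (h1 : 2 * n1 - v1 = m * w1) (h2 : 2 * n2 - v2 = m * w2)
    (hn : n1 * v2 - n2 * v1 = 1 ∨ n1 * v2 - n2 * v1 = -1) :
    w1 * v2 - w2 * v1 = 2 ∨ w1 * v2 - w2 * v1 = -2 := by
  have key : m * (w1 * v2 - w2 * v1) = 2 * (n1 * v2 - n2 * v1) := by
    linear_combination -v2 * h1 + v1 * h2
  have hodd : ¬ (2 ∣ m) := by
    rintro ⟨k, rfl⟩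
    have d1 : (2:ℤ) ∣ v1 := ⟨n1 - k * w1, by linear_combination -h1⟩
    have d2 : (2:ℤ) ∣ v2 := ⟨n2 - k * w2, by linear_combination -h2⟩
    have := hv.isUnit_of_dvd' d1 d2
    rw [Int.isUnit_iff] at this
    omega
  have hdvd : m ∣ 2 := by
    rcases hn with h | h
    · exact ⟨w1 * v2 - w2 * v1, by rw [key, h]; ring⟩
    · exact ⟨-(w1 * v2 - w2 * v1), by rw [mul_neg, key, h]; ring⟩
  have hle := Int.le_of_dvd (by norm_num) hdvd
  have hge := Int.le_of_dvd (by norm_num) ((neg_dvd).2 hdvd)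
  have : m = 1 ∨ m = -1 := by
    have : m ≠ 0 := by rintro rfl; simp at hodd
    have : m ≠ 2 := by rintro rfl; simp at hodd
    have : m ≠ -2 := by rintro rfl; norm_num at hodd
    omega
  rcases this with rfl | rfl <;> rcases hn with h | h <;> rw [h] at key <;> omega

end

section
open Set Complex

theorem TorusCurve.sep (C : TorusCurve) {x y : ℝ} (h : torusMk (C.f x) = torusMk (C.f y))
    (h0 : 0 < y - x) (h1 : y - x < 1) : False := by
  obtain ⟨n, hn⟩ := C.inj x y h
  have a : (0:ℝ) < n := by linarith
  have b : (n:ℝ) < 1 := by linarith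
  have a' : 0 < n := by exact_mod_cast a
  have b' : n < 1 := by exact_mod_cast b
  omega

theorem fwd_anti (C C' : TorusCurve) {E : ℝ × ℝ → ℝ × ℝ} (hE : Continuous E)
    (hinj : ∀ p ∈ Icc (0:ℝ) 1 ×ˢ Icc (0:ℝ) 1, ∀ q ∈ Icc (0:ℝ) 1 ×ˢ Icc (0:ℝ) 1,
      torusMk (E p) = torusMk (E q) → p = q)
    (hon : ∀ x, ∀ p ∈ Icc (0:ℝ) 1 ×ˢ Icc (0:ℝ) 1, torusMk (C.f x) = torusMk (E p) → p.1 = 0 ∨ p.1 = 1)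
    (hC1 : ∀ y ∈ C'.image, (∃ x, y = torusMk (C.f x) ∧ ∀ p ∈ Icc (0:ℝ) 1 ×ˢ Icc (0:ℝ) 1,
      (p.1 = 0 ∨ p.1 = 1) → torusMk (E p) ≠ y) ∨
      ∃ p ∈ Icc (0:ℝ) 1 ×ˢ Icc (0:ℝ) 1, (p.2 = 0 ∨ p.2 = 1) ∧ y = torusMk (E p))
    (hC3 : ∀ p ∈ Icc (0:ℝ) 1 ×ˢ Icc (0:ℝ) 1, (p.2 = 0 ∨ p.2 = 1) → torusMk (E p) ∈ C'.image)
    {σ τ : ℝ → ℝ} (hσc : Continuous σ) (hτc : Continuous τ)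
    (hσ : ∀ r ∈ Icc (0:ℝ) 1, torusMk (C.f (σ r)) = torusMk (E (0, r)))
    (hτ : ∀ r ∈ Icc (0:ℝ) 1, torusMk (C.f (τ r)) = torusMk (E (1, r)))
    (o1 : σ 0 < σ 1) (o2 : σ 1 < τ 1) (o3 : τ 1 < τ 0) (o4 : τ 0 < σ 0 + 1) : False := by
  have hfc := C.cont
  have hmc := mk_cont
  set P : Set Torus := (fun x => torusMk (C.f x)) '' Icc (σ 1) (τ 1) ∪
    (fun u : ℝ => torusMk (E (u, 1))) '' Icc 0 1 with hP
  set Q : Set Torus := (fun x => torusMk (C.f x)) '' Icc (τ 0) (σ 0 + 1) ∪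
    (fun u : ℝ => torusMk (E (u, 0))) '' Icc 0 1 with hQ
  have cP : IsClosed P := by
    apply IsClosed.union
    · exact (isCompact_Icc.image (by fun_prop)).isClosed
    · exact (isCompact_Icc.image (by fun_prop)).isClosed
  have cQ : IsClosed Q := by
    apply IsClosed.union
    · exact (isCompact_Icc.image (by fun_prop)).isClosed
    · exact (isCompact_Icc.image (by fun_prop)).isClosed
  have hpre : IsPreconnected C'.image := by
    have hfc' := C'.cont
    exact isPreconnected_range (by fun_prop)
  have hsub : C'.image ⊆ P ∪ Q := by
    intro y hy
    rcases hC1 y hy with ⟨x, rfl, hx⟩ | ⟨p, hp, hp2, rfl⟩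
    · set k : ℤ := ⌊x - σ 0⌋ with hk
      have k0 := Int.floor_le (x - σ 0)
      have k1 := Int.lt_floor_add_one (x - σ 0)
      rw [← hk] at k0 k1
      have hz : torusMk (C.f (x - k)) = torusMk (C.f x) := by
        have := C.mk_per (x - k) k; rw [← this]; congr 2; ring
      rw [← hz] at hx ⊢
      set z := x - k
      have z0 : σ 0 ≤ z := by simp only [z]; linarith
      have z1 : z < σ 0 + 1 := by simp only [z]; linarith
      by_cases c1 : z < σ 1
      · exfalso
        obtain ⟨r, hr, hr'⟩ := intermediate_value_Icc (zero_le_one (α := ℝ)) hσc.continuousOn ⟨z0, c1.le⟩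
        exact hx (0, r) ⟨s0mem, hr⟩ (Or.inl rfl) (by rw [← hσ r hr, hr'])
      by_cases c2 : z ≤ τ 1
      · left; left; exact ⟨z, ⟨not_lt.1 c1, c2⟩, rfl⟩
      by_cases c3 : z < τ 0
      · exfalso
        obtain ⟨r, hr, hr'⟩ := intermediate_value_Icc' (zero_le_one (α := ℝ)) hτc.continuousOn
          ⟨(not_le.1 c2).le, c3.le⟩
        exact hx (1, r) ⟨s1mem, hr⟩ (Or.inr rfl) (by rw [← hτ r hr, hr'])
      · right; left; exact ⟨z, ⟨not_lt.1 c3, z1.le⟩, rfl⟩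
    · obtain ⟨u, r⟩ := p
      rcases hp2 with h | h
      · simp only at h; subst h; right; right; exact ⟨u, hp.1, rfl⟩
      · simp only at h; subst h; left; right; exact ⟨u, hp.1, rfl⟩
  obtain ⟨y, hy, hyP, hyQ⟩ := isPreconnected_closed_iff.1 hpre P Q cP cQ hsub
    ⟨_, hC3 (0, 1) ⟨s0mem, s1mem⟩ (Or.inr rfl), Or.inr ⟨0, s0mem, rfl⟩⟩
    ⟨_, hC3 (0, 0) ⟨s0mem, s0mem⟩ (Or.inl rfl), Or.inr ⟨0, s0mem, rfl⟩⟩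
  rcases hyP with ⟨x, hx, rfl⟩ | ⟨u, hu, rfl⟩
  · rcases hyQ with ⟨x', hx', h⟩ | ⟨u', hu', h⟩
    · simp only at h
      exact C.sep h.symm (by linarith [hx.2, hx'.1]) (by linarith [hx.1, hx'.2])
    · simp only at h
      rcases hon x _ ⟨hu', s0mem⟩ h.symm with h' | h'
      · simp only at h'; subst h'
        rw [← hσ 0 s0mem] at h
        exact C.sep h (by linarith [hx.1]) (by linarith [hx.2])
      · simp only at h'; subst h'
        rw [← hτ 0 s0mem] at h
        exact C.sep h.symm (by linarith [hx.2]) (by linarith [hx.1])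
  · rcases hyQ with ⟨x', hx', h⟩ | ⟨u', hu', h⟩
    · simp only at h
      rcases hon x' _ ⟨hu, s1mem⟩ h with h' | h'
      · simp only at h'; subst h'
        rw [← hσ 1 s1mem] at h
        exact C.sep h.symm (by linarith [hx'.1]) (by linarith [hx'.2])
      · simp only at h'; subst h'
        rw [← hτ 1 s1mem] at h
        exact C.sep h.symm (by linarith [hx'.1]) (by linarith [hx'.2])
    · simp only at h
      have := hinj _ ⟨hu', s0mem⟩ _ ⟨hu, s1mem⟩ h
      rw [Prod.ext_iff] at this
      simp at this

theorem fwd_mono (C C' : TorusCurve) {E : ℝ × ℝ → ℝ × ℝ} (hE : Continuous E)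
    (hinj : ∀ p ∈ Icc (0:ℝ) 1 ×ˢ Icc (0:ℝ) 1, ∀ q ∈ Icc (0:ℝ) 1 ×ˢ Icc (0:ℝ) 1,
      torusMk (E p) = torusMk (E q) → p = q)
    (hon : ∀ x, ∀ p ∈ Icc (0:ℝ) 1 ×ˢ Icc (0:ℝ) 1, torusMk (C.f x) = torusMk (E p) → p.1 = 0 ∨ p.1 = 1)
    (hC2 : ∀ x, (∀ p ∈ Icc (0:ℝ) 1 ×ˢ Icc (0:ℝ) 1,
      (p.1 = 0 ∨ p.1 = 1) → torusMk (E p) ≠ torusMk (C.f x)) → torusMk (C.f x) ∈ C'.image)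
    (hC3 : ∀ p ∈ Icc (0:ℝ) 1 ×ˢ Icc (0:ℝ) 1, (p.2 = 0 ∨ p.2 = 1) → torusMk (E p) ∈ C'.image)
    {σ τ : ℝ → ℝ} {n1 n2 : ℤ}
    (hσ : ∀ r ∈ Icc (0:ℝ) 1, C.f (σ r) = E (0, r))
    (hτ : ∀ r ∈ Icc (0:ℝ) 1, C.f (τ r) = E (1, r) + ((n1:ℝ), (n2:ℝ)))
    (hσm : ∀ r ∈ Icc (0:ℝ) 1, σ 0 ≤ σ r ∧ σ r ≤ σ 1)
    (hτm : ∀ r ∈ Icc (0:ℝ) 1, τ 0 ≤ τ r ∧ τ r ≤ τ 1)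
    (o1 : σ 0 < σ 1) (o2 : σ 1 < τ 0) (o3 : τ 0 < τ 1) (o4 : τ 1 < σ 0 + 1) :
    C'.p * C.q - C'.q * C.p = 2 ∨ C'.p * C.q - C'.q * C.p = -2 := by
  have hfc := C.cont
  have hτ' : ∀ r ∈ Icc (0:ℝ) 1, torusMk (C.f (τ r)) = torusMk (E (1, r)) := by
    intro r hr; rw [eq_comm, mk_eq_iff]; exact ⟨n1, n2, hτ r hr⟩
  have hσ' : ∀ r ∈ Icc (0:ℝ) 1, torusMk (C.f (σ r)) = torusMk (E (0, r)) := by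
    intro r hr; rw [hσ r hr]
  set A1 : ℝ → ℝ × ℝ := fun t => C.f (σ 1 + t * (τ 0 - σ 1)) with hA1
  set A2 : ℝ → ℝ × ℝ := fun t => C.f (τ 1 + t * (σ 0 + 1 - τ 1)) with hA2
  have cA1 : Continuous A1 := by rw [hA1]; fun_prop
  have cA2 : Continuous A2 := by rw [hA2]; fun_prop
  have e1 : A1 0 = E (0, 1) := by simp only [hA1]; rw [← hσ 1 s1mem]; congr 1; ring
  have e2 : A1 1 = E (1, 0) + ((n1:ℝ), (n2:ℝ)) := by
    simp only [hA1]; rw [← hτ 0 s0mem]; congr 1; ring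
  have e3 : A2 0 = E (1, 1) + ((n1:ℝ), (n2:ℝ)) := by
    simp only [hA2]; rw [← hτ 1 s1mem]; congr 1; ring
  have e4 : A2 1 = E (0, 0) + ((C.p:ℝ), (C.q:ℝ)) := by
    simp only [hA2]; rw [← hσ 0 s0mem, ← C.per]; congr 1; ring
  have b1 : ∀ t ∈ Icc (0:ℝ) 1, σ 1 ≤ σ 1 + t * (τ 0 - σ 1) ∧ σ 1 + t * (τ 0 - σ 1) ≤ τ 0 := by
    intro t ht; constructor <;> nlinarith [ht.1, ht.2]
  have b2 : ∀ t ∈ Icc (0:ℝ) 1, τ 1 ≤ τ 1 + t * (σ 0 + 1 - τ 1) ∧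
      τ 1 + t * (σ 0 + 1 - τ 1) ≤ σ 0 + 1 := by
    intro t ht; constructor <;> nlinarith [ht.1, ht.2]
  have hn := core_pm hE hinj cA1 cA2 n1 n2 C.p C.q e1 e2 e3 e4
    (by
      intro s hs t ht h
      obtain ⟨x0, x1⟩ := b1 s hs
      simp only [hA1] at h
      rcases hon _ _ ⟨ht, ht⟩ h with h' | h'
      · simp only at h'; subst h'
        rw [← hσ' 0 s0mem] at h
        exact C.sep h.symm (by linarith) (by linarith)
      · simp only at h'; subst h'
        rw [← hτ' 1 s1mem] at h
        exact C.sep h (by linarith) (by linarith))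
    (by
      intro s hs t ht h
      obtain ⟨x0, x1⟩ := b2 s hs
      simp only [hA2] at h
      have ht' : 1 - t ∈ Icc (0:ℝ) 1 := ⟨by linarith [ht.2], by linarith [ht.1]⟩
      rcases hon _ _ ⟨ht, ht'⟩ h with h' | h'
      · simp only at h'; subst h'
        rw [sub_zero, ← hσ' 1 s1mem] at h
        exact C.sep h.symm (by linarith) (by linarith)
      · simp only at h'; subst h'
        rw [sub_self, ← hτ' 0 s0mem] at h
        exact C.sep h.symm (by linarith) (by linarith))
    (by
      intro s hs t ht h
      obtain ⟨x0, x1⟩ := b2 s hs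
      obtain ⟨y0, y1⟩ := b1 t ht
      exact C.sep h.symm (by linarith) (by linarith))
  -- the arcs lie in the new curve
  have i1 : ∀ t ∈ Icc (0:ℝ) 1, torusMk (A1 t) ∈ C'.image := by
    intro t ht
    rcases eq_or_lt_of_le ht.1 with h | h
    · rw [← h, e1]; exact hC3 _ ⟨s0mem, s1mem⟩ (Or.inr rfl)
    rcases eq_or_lt_of_le ht.2 with h' | h'
    · rw [h', e2]
      have : torusMk (E (1, 0) + ((n1:ℝ), (n2:ℝ))) = torusMk (E (1, 0)) := by
        rw [eq_comm, mk_eq_iff]; exact ⟨n1, n2, rfl⟩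
      rw [this]; exact hC3 _ ⟨s1mem, s0mem⟩ (Or.inl rfl)
    have x0 : σ 1 < σ 1 + t * (τ 0 - σ 1) := by nlinarith
    have x1 : σ 1 + t * (τ 0 - σ 1) < τ 0 := by nlinarith
    apply hC2
    rintro ⟨u, r⟩ hp h heq
    rcases h with h | h
    · simp only at h; subst h
      rw [← hσ' r hp.2] at heq
      have := hσm r hp.2
      exact C.sep heq (by linarith) (by linarith)
    · simp only at h; subst h
      rw [← hτ' r hp.2] at heq
      have := hτm r hp.2
      exact C.sep heq.symm (by linarith) (by linarith)
  have i2 : ∀ t ∈ Icc (0:ℝ) 1, torusMk (A2 t) ∈ C'.image := by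
    intro t ht
    rcases eq_or_lt_of_le ht.1 with h | h
    · rw [← h, e3]
      have : torusMk (E (1, 1) + ((n1:ℝ), (n2:ℝ))) = torusMk (E (1, 1)) := by
        rw [eq_comm, mk_eq_iff]; exact ⟨n1, n2, rfl⟩
      rw [this]; exact hC3 _ ⟨s1mem, s1mem⟩ (Or.inr rfl)
    rcases eq_or_lt_of_le ht.2 with h' | h'
    · rw [h', e4]
      have : torusMk (E (0, 0) + ((C.p:ℝ), (C.q:ℝ))) = torusMk (E (0, 0)) := by
        rw [eq_comm, mk_eq_iff]; exact ⟨C.p, C.q, rfl⟩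
      rw [this]; exact hC3 _ ⟨s0mem, s0mem⟩ (Or.inl rfl)
    have x0 : τ 1 < τ 1 + t * (σ 0 + 1 - τ 1) := by nlinarith
    have x1 : τ 1 + t * (σ 0 + 1 - τ 1) < σ 0 + 1 := by nlinarith
    apply hC2
    rintro ⟨u, r⟩ hp h heq
    rcases h with h | h
    · simp only at h; subst h
      rw [← hσ' r hp.2] at heq
      have := hσm r hp.2
      exact C.sep heq (by linarith) (by linarith)
    · simp only at h; subst h
      rw [← hτ' r hp.2] at heq
      have := hτm r hp.2
      exact C.sep heq (by linarith) (by linarith)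
  have hI : ∀ t ∈ Icc (0:ℝ) 1, 1 - t ∈ Icc (0:ℝ) 1 := fun t ht =>
    ⟨by linarith [ht.2], by linarith [ht.1]⟩
  obtain ⟨x, hx⟩ := hC3 (0, 1) ⟨s0mem, s1mem⟩ (Or.inr rfl)
  simp only at hx
  rw [eq_comm, mk_eq_iff] at hx
  obtain ⟨k1, k2, hk⟩ := hx
  have t1 := C'.transport cA1 i1 (m := k1) (n := k2) ⟨x, by rw [hk, e1]⟩
  have t2 := C'.transport (γ := fun t => E (1 - t, 0)) (by fun_prop)
    (fun t ht => hC3 _ ⟨hI t ht, s0mem⟩ (Or.inl rfl)) (m := n1 + k1) (n := n2 + k2) (by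
      obtain ⟨y, hy⟩ := t1
      refine ⟨y, ?_⟩
      rw [hy, e2, sub_zero]; ext <;> simp <;> ring)
  have t3 := C'.transport (γ := fun t => A2 (1 - t)) (by fun_prop)
    (fun t ht => i2 _ (hI t ht)) (m := n1 + k1 - C.p) (n := n2 + k2 - C.q) (by
      obtain ⟨y, hy⟩ := t2
      refine ⟨y, ?_⟩
      simp only [sub_zero, sub_self] at hy ⊢
      rw [hy, e4]; ext <;> simp <;> ring)
  have t4 := C'.transport (γ := fun t => E (1 - t, 1)) (by fun_prop)
    (fun t ht => hC3 _ ⟨hI t ht, s1mem⟩ (Or.inr rfl)) (m := 2 * n1 + k1 - C.p)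
    (n := 2 * n2 + k2 - C.q) (by
      obtain ⟨y, hy⟩ := t3
      refine ⟨y, ?_⟩
      simp only [sub_zero, sub_self] at hy ⊢
      rw [hy, e3]; ext <;> simp <;> ring)
  obtain ⟨y, hy⟩ := t4
  simp only [sub_self] at hy
  obtain ⟨m, m1, m2, -⟩ := C'.mul_class (x := x) (y := y) (m := 2 * n1 - C.p) (n := 2 * n2 - C.q) (by
    rw [hy, hk]; ext <;> simp <;> ring)
  exact arith_final C.prim m1 m2 hn

theorem fwd_aux (C C' : TorusCurve) {E : ℝ × ℝ → ℝ × ℝ} (hE : Continuous E)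
    (hinj : ∀ p ∈ Icc (0:ℝ) 1 ×ˢ Icc (0:ℝ) 1, ∀ q ∈ Icc (0:ℝ) 1 ×ˢ Icc (0:ℝ) 1,
      torusMk (E p) = torusMk (E q) → p = q)
    (hon : ∀ x, ∀ p ∈ Icc (0:ℝ) 1 ×ˢ Icc (0:ℝ) 1, torusMk (C.f x) = torusMk (E p) → p.1 = 0 ∨ p.1 = 1)
    (hC1 : ∀ y ∈ C'.image, (∃ x, y = torusMk (C.f x) ∧ ∀ p ∈ Icc (0:ℝ) 1 ×ˢ Icc (0:ℝ) 1,
      (p.1 = 0 ∨ p.1 = 1) → torusMk (E p) ≠ y) ∨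
      ∃ p ∈ Icc (0:ℝ) 1 ×ˢ Icc (0:ℝ) 1, (p.2 = 0 ∨ p.2 = 1) ∧ y = torusMk (E p))
    (hC2 : ∀ x, (∀ p ∈ Icc (0:ℝ) 1 ×ˢ Icc (0:ℝ) 1,
      (p.1 = 0 ∨ p.1 = 1) → torusMk (E p) ≠ torusMk (C.f x)) → torusMk (C.f x) ∈ C'.image)
    (hC3 : ∀ p ∈ Icc (0:ℝ) 1 ×ˢ Icc (0:ℝ) 1, (p.2 = 0 ∨ p.2 = 1) → torusMk (E p) ∈ C'.image)
    {σ τ : ℝ → ℝ} (hσc : Continuous σ) (hτc : Continuous τ) {n1 n2 : ℤ}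
    (hσ : ∀ r ∈ Icc (0:ℝ) 1, C.f (σ r) = E (0, r))
    (hτ : ∀ r ∈ Icc (0:ℝ) 1, C.f (τ r) = E (1, r) + ((n1:ℝ), (n2:ℝ)))
    (hσm : StrictMonoOn σ (Icc 0 1)) :
    C'.p * C.q - C'.q * C.p = 2 ∨ C'.p * C.q - C'.q * C.p = -2 := by
  -- normalise the second arc
  have hj : ∃ j : ℤ, 0 < τ 0 + j - σ 0 ∧ τ 0 + j - σ 0 ≤ 1 := by
    refine ⟨⌈σ 0 - τ 0⌉ + (if (⌈σ 0 - τ 0⌉ : ℝ) = σ 0 - τ 0 then 1 else 0), ?_⟩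
    have a := Int.le_ceil (σ 0 - τ 0)
    have b := Int.ceil_lt_add_one (σ 0 - τ 0)
    split_ifs with h
    · push_cast; constructor <;> linarith
    · have := lt_of_le_of_ne a (Ne.symm h)
      push_cast; constructor <;> linarith
  obtain ⟨j, j0, j1⟩ := hj
  set T : ℝ → ℝ := fun r => τ r + j with hT
  have hTc : Continuous T := by rw [hT]; fun_prop
  have hT' : ∀ r ∈ Icc (0:ℝ) 1, C.f (T r) = E (1, r) +
      (((n1 + j * C.p : ℤ):ℝ), ((n2 + j * C.q : ℤ):ℝ)) := by
    intro r hr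
    simp only [hT]
    rw [C.per_int, hτ r hr]; ext <;> simp <;> ring
  have hTmk : ∀ r ∈ Icc (0:ℝ) 1, torusMk (C.f (T r)) = torusMk (E (1, r)) := by
    intro r hr; rw [eq_comm, mk_eq_iff]; exact ⟨_, _, hT' r hr⟩
  have hσmk : ∀ r ∈ Icc (0:ℝ) 1, torusMk (C.f (σ r)) = torusMk (E (0, r)) := by
    intro r hr; rw [hσ r hr]
  have hne : ∀ r ∈ Icc (0:ℝ) 1, ∀ r' ∈ Icc (0:ℝ) 1, ∀ n : ℤ, T r' - σ r ≠ n := by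
    intro r hr r' hr' n hn
    have : torusMk (E (0, r)) = torusMk (E (1, r')) := by
      rw [← hσmk r hr, ← hTmk r' hr', ← C.mk_per (σ r) n]
      congr 2; linarith
    have := hinj _ ⟨s0mem, hr⟩ _ ⟨s1mem, hr'⟩ this
    rw [Prod.ext_iff] at this
    simp at this
  have hb0 : 0 < T 0 - σ 0 ∧ T 0 - σ 0 < 1 := by
    refine ⟨j0, lt_of_le_of_ne j1 ?_⟩
    have := hne 0 s0mem 0 s0mem 1
    simpa using this
  have hb : ∀ r ∈ Icc (0:ℝ) 1, ∀ r' ∈ Icc (0:ℝ) 1, 0 < T r' - σ r ∧ T r' - σ r < 1 := by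
    intro r hr r' hr'
    have h1 := sur_between (g := fun r => T 0 - σ r) (by fun_prop)
      (fun t ht => hne t ht 0 s0mem) s0mem hb0.1 hb0.2 hr
    exact sur_between (g := fun r' => T r' - σ r) (by fun_prop)
      (fun t ht => hne r hr t ht) s0mem h1.1 h1.2 hr'
  have hTinj : InjOn T (Icc 0 1) := by
    intro r hr r' hr' h
    have : torusMk (E (1, r)) = torusMk (E (1, r')) := by rw [← hTmk r hr, ← hTmk r' hr', h]
    have := hinj _ ⟨s1mem, hr⟩ _ ⟨s1mem, hr'⟩ this
    rw [Prod.ext_iff] at this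
    exact this.2
  have o1 := hσm s0mem s1mem zero_lt_one
  rcases hTc.continuousOn.strictMonoOn_of_injOn_Icc' zero_le_one hTinj with hm | hm
  · have o3 := hm s0mem s1mem zero_lt_one
    exact fwd_mono C C' hE hinj hon hC2 hC3 hσ hT'
      (fun r hr => ⟨hσm.monotoneOn s0mem hr hr.1, hσm.monotoneOn hr s1mem hr.2⟩)
      (fun r hr => ⟨hm.monotoneOn s0mem hr hr.1, hm.monotoneOn hr s1mem hr.2⟩)
      o1 (by linarith [(hb 1 s1mem 0 s0mem).1]) o3 (by linarith [(hb 0 s0mem 1 s1mem).2])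
  · have o3 := hm s0mem s1mem zero_lt_one
    exact (fwd_anti C C' hE hinj hon hC1 hC3 hσc hTc hσmk hTmk o1
      (by linarith [(hb 1 s1mem 1 s1mem).1]) o3 (by linarith [(hb 0 s0mem 0 s0mem).2])).elim

theorem fwd (C C' : TorusCurve) (h : ObtainedBySurgery C.image C'.image) :
    C'.p * C.q - C'.q * C.p = 2 ∨ C'.p * C.q - C'.q * C.p = -2 := by
  obtain ⟨e, he, hinj, hinter, hC'⟩ := h
  obtain ⟨E0, hE0, hE0'⟩ := torus_lift e he
  have hmem : ∀ p ∈ Icc (0:ℝ) 1 ×ˢ Icc (0:ℝ) 1, (p.1 = 0 ∨ p.1 = 1) → e p ∈ C.image := by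
    intro p hp h
    have : e p ∈ e '' (({0, 1} : Set ℝ) ×ˢ Set.Icc 0 1) := ⟨p, ⟨by simpa using h, hp.2⟩, rfl⟩
    rw [← hinter] at this
    exact this.1
  obtain ⟨σ, k1, k2, hσc, hσ⟩ := C.path (γ := fun r => E0 (0, r)) (by fun_prop) (by
    intro r hr; rw [hE0']; exact hmem _ ⟨s0mem, hr⟩ (Or.inl rfl))
  obtain ⟨E, hE⟩ : ∃ E : ℝ × ℝ → ℝ × ℝ, E = fun p => E0 p + ((k1:ℝ), (k2:ℝ)) := ⟨_, rfl⟩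
  have hEc : Continuous E := by rw [hE]; fun_prop
  have hEe : ∀ p, torusMk (E p) = e p := by
    intro p; rw [← hE0', eq_comm, mk_eq_iff]; exact ⟨k1, k2, by rw [hE]⟩
  have hσ' : ∀ r ∈ Icc (0:ℝ) 1, C.f (σ r) = E (0, r) := by intro r hr; rw [hσ r hr, hE]
  obtain ⟨τ, n1, n2, hτc, hτ⟩ := C.path (γ := fun r => E (1, r)) (by fun_prop) (by
    intro r hr; rw [hEe]; exact hmem _ ⟨s1mem, hr⟩ (Or.inr rfl))
  have ginj : ∀ p ∈ Icc (0:ℝ) 1 ×ˢ Icc (0:ℝ) 1, ∀ q ∈ Icc (0:ℝ) 1 ×ˢ Icc (0:ℝ) 1,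
      torusMk (E p) = torusMk (E q) → p = q := by
    intro p hp q hq h
    rw [hEe, hEe] at h
    exact hinj hp hq h
  have hon : ∀ x, ∀ p ∈ Icc (0:ℝ) 1 ×ˢ Icc (0:ℝ) 1, torusMk (C.f x) = torusMk (E p) →
      p.1 = 0 ∨ p.1 = 1 := by
    intro x p hp h
    rw [hEe] at h
    have : e p ∈ C.image ∩ e '' (Set.Icc 0 1 ×ˢ Set.Icc 0 1) := ⟨⟨x, h⟩, p, hp, rfl⟩
    rw [hinter] at this
    obtain ⟨p', hp', heq⟩ := this
    have hp2 : p' ∈ Icc (0:ℝ) 1 ×ˢ Icc (0:ℝ) 1 := by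
      refine ⟨?_, hp'.2⟩
      rcases hp'.1 with h | h
      · rw [h]; exact s0mem
      · rw [h]; exact s1mem
    rw [← hinj hp2 hp heq]
    simpa using hp'.1
  have hC1 : ∀ y ∈ C'.image, (∃ x, y = torusMk (C.f x) ∧ ∀ p ∈ Icc (0:ℝ) 1 ×ˢ Icc (0:ℝ) 1,
      (p.1 = 0 ∨ p.1 = 1) → torusMk (E p) ≠ y) ∨
      ∃ p ∈ Icc (0:ℝ) 1 ×ˢ Icc (0:ℝ) 1, (p.2 = 0 ∨ p.2 = 1) ∧ y = torusMk (E p) := by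
    intro y hy
    rw [hC'] at hy
    rcases hy with ⟨⟨x, hx⟩, hn⟩ | ⟨p, hp, hpe⟩
    · left
      refine ⟨x, hx.symm, fun p hp h heq => hn ⟨p, ⟨by simpa using h, hp.2⟩, by rw [← hEe, heq]⟩⟩
    · right
      refine ⟨p, ⟨hp.1, ?_⟩, by simpa using hp.2, by rw [hEe, hpe]⟩
      rcases hp.2 with h | h
      · rw [h]; exact s0mem
      · rw [h]; exact s1mem
  have hC2 : ∀ x, (∀ p ∈ Icc (0:ℝ) 1 ×ˢ Icc (0:ℝ) 1,
      (p.1 = 0 ∨ p.1 = 1) → torusMk (E p) ≠ torusMk (C.f x)) → torusMk (C.f x) ∈ C'.image := by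
    intro x hx
    rw [hC']
    left
    refine ⟨⟨x, rfl⟩, ?_⟩
    rintro ⟨p, hp, hpe⟩
    have hp2 : p ∈ Icc (0:ℝ) 1 ×ˢ Icc (0:ℝ) 1 := by
      refine ⟨?_, hp.2⟩
      rcases hp.1 with h | h
      · rw [h]; exact s0mem
      · rw [h]; exact s1mem
    exact hx p hp2 (by simpa using hp.1) (by rw [hEe, hpe])
  have hC3 : ∀ p ∈ Icc (0:ℝ) 1 ×ˢ Icc (0:ℝ) 1, (p.2 = 0 ∨ p.2 = 1) → torusMk (E p) ∈ C'.image := by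
    intro p hp h
    rw [hC']
    right
    exact ⟨p, ⟨hp.1, by simpa using h⟩, by rw [hEe]⟩
  have hσinj : InjOn σ (Icc 0 1) := by
    intro r hr r' hr' h
    have : torusMk (E (0, r)) = torusMk (E (0, r')) := by rw [← hσ' r hr, ← hσ' r' hr', h]
    have := ginj _ ⟨s0mem, hr⟩ _ ⟨s0mem, hr'⟩ this
    rw [Prod.ext_iff] at this
    exact this.2
  have hI : ∀ t ∈ Icc (0:ℝ) 1, 1 - t ∈ Icc (0:ℝ) 1 := fun t ht =>
    ⟨by linarith [ht.2], by linarith [ht.1]⟩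
  rcases hσc.continuousOn.strictMonoOn_of_injOn_Icc' zero_le_one hσinj with hm | hm
  · exact fwd_aux C C' hEc ginj hon hC1 hC2 hC3 hσc hτc hσ' hτ hm
  · -- flip the band
    have flip : ∀ p ∈ Icc (0:ℝ) 1 ×ˢ Icc (0:ℝ) 1, (p.1, 1 - p.2) ∈ Icc (0:ℝ) 1 ×ˢ Icc (0:ℝ) 1 :=
      fun p hp => ⟨hp.1, hI _ hp.2⟩
    have h01 : ∀ x : ℝ, (x = 0 ∨ x = 1) → (1 - x = 0 ∨ 1 - x = 1) := by
      rintro x (rfl | rfl) <;> simp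
    refine fwd_aux C C' (E := fun p => E (p.1, 1 - p.2)) (by fun_prop) ?_ ?_ ?_ ?_ ?_
      (σ := fun r => σ (1 - r)) (τ := fun r => τ (1 - r)) (by fun_prop) (by fun_prop)
      (n1 := n1) (n2 := n2) (fun r hr => hσ' _ (hI r hr)) (fun r hr => hτ _ (hI r hr))
      (fun r hr r' hr' hlt => hm (hI _ hr') (hI _ hr) (by linarith))
    · intro p hp q hq h
      have := ginj _ (flip p hp) _ (flip q hq) h
      rw [Prod.ext_iff] at this
      simp only at this
      exact Prod.ext this.1 (by linarith [this.2])
    · intro x p hp h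
      exact hon x (p.1, 1 - p.2) (flip p hp) h
    · intro y hy
      rcases hC1 y hy with ⟨x, hx, hx'⟩ | ⟨p, hp, hp2, rfl⟩
      · exact Or.inl ⟨x, hx, fun p hp h => hx' _ (flip p hp) h⟩
      · exact Or.inr ⟨(p.1, 1 - p.2), flip p hp, h01 _ hp2, by simp⟩
    · intro x hx
      apply hC2
      intro p hp h
      have := hx _ (flip p hp) h
      simpa using this
    · intro p hp h
      exact hC3 _ (flip p hp) (h01 _ h)

end

section
open Set Complex

/-- change of basis -/
def sB (v n : ℤ × ℤ) (z : ℝ × ℝ) : ℝ × ℝ := (z.1 * v.1 + z.2 * n.1, z.1 * v.2 + z.2 * n.2)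

theorem sB_cont (v n : ℤ × ℤ) : Continuous (sB v n) := by unfold sB; fun_prop

theorem sB_mk {v n : ℤ × ℤ} (h : n.1 * v.2 - n.2 * v.1 = 1 ∨ n.1 * v.2 - n.2 * v.1 = -1)
    (p q : ℝ × ℝ) : torusMk (sB v n p) = torusMk (sB v n q) ↔
      ∃ a b : ℤ, q = p + ((a:ℝ), (b:ℝ)) := by
  rw [mk_eq_iff]
  constructor
  · rintro ⟨a, b, hab⟩
    rw [Prod.ext_iff] at hab
    simp only [sB, Prod.fst_add, Prod.snd_add] at hab
    obtain ⟨h1, h2⟩ := hab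
    rcases h with h | h
    · have h' : (n.1:ℝ) * v.2 - n.2 * v.1 = 1 := by exact_mod_cast h
      refine ⟨b * n.1 - a * n.2, a * v.2 - b * v.1, ?_⟩
      ext
      · simp only [Prod.fst_add]; push_cast
        linear_combination (p.1 - q.1) * h' - n.2 * h1 + n.1 * h2
      · simp only [Prod.snd_add]; push_cast
        linear_combination (p.2 - q.2) * h' + v.2 * h1 - v.1 * h2
    · have h' : (n.1:ℝ) * v.2 - n.2 * v.1 = -1 := by exact_mod_cast h
      refine ⟨-(b * n.1 - a * n.2), -(a * v.2 - b * v.1), ?_⟩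
      ext
      · simp only [Prod.fst_add]; push_cast
        linear_combination (q.1 - p.1) * h' + n.2 * h1 - n.1 * h2
      · simp only [Prod.snd_add]; push_cast
        linear_combination (q.2 - p.2) * h' - v.2 * h1 + v.1 * h2
  · rintro ⟨a, b, rfl⟩
    refine ⟨a * v.1 + b * n.1, a * v.2 + b * n.2, ?_⟩
    ext <;> simp [sB] <;> ring

/-- the surgered curve in basis coordinates -/
noncomputable def sF (s : ℝ) : ℝ × ℝ :=
  (1/4 + sclamp (4*s) / 2 + sclamp (4*s-1) / 4 + sclamp (4*s-2) / 2 - sclamp (4*s-3) / 4,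
    sclamp (4*s) + sclamp (4*s-2))

theorem sF_cont : Continuous sF := by
  have := sclamp_cont
  unfold sF; fun_prop

theorem sclamp_lo {x : ℝ} (h : x ≤ 0) : sclamp x = 0 := by
  unfold sclamp; rw [min_eq_right (by linarith), max_eq_left h]
theorem sclamp_hi {x : ℝ} (h : 1 ≤ x) : sclamp x = 1 := by
  unfold sclamp; rw [min_eq_left h]; norm_num

theorem sF1 {u : ℝ} (h0 : 0 ≤ u) (h1 : u ≤ 1) : sF (u/4) = (1/4 + u/2, u) := by
  unfold sF
  rw [sclamp_eq (x := 4*(u/4)) ⟨by linarith, by linarith⟩, sclamp_lo (by linarith),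
    sclamp_lo (by linarith), sclamp_lo (by linarith)]
  ext <;> simp only <;> ring
theorem sF2 {u : ℝ} (h0 : 0 ≤ u) (h1 : u ≤ 1) : sF ((1+u)/4) = (3/4 + u/4, 1) := by
  unfold sF
  rw [sclamp_hi (x := 4*((1+u)/4)) (by linarith), sclamp_eq (x := 4*((1+u)/4)-1) ⟨by linarith, by linarith⟩,
    sclamp_lo (by linarith), sclamp_lo (by linarith)]
  ext <;> simp only <;> ring
theorem sF3 {u : ℝ} (h0 : 0 ≤ u) (h1 : u ≤ 1) : sF ((2+u)/4) = (1 + u/2, 1 + u) := by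
  unfold sF
  rw [sclamp_hi (x := 4*((2+u)/4)) (by linarith), sclamp_hi (x := 4*((2+u)/4)-1) (by linarith),
    sclamp_eq (x := 4*((2+u)/4)-2) ⟨by linarith, by linarith⟩, sclamp_lo (by linarith)]
  ext <;> simp only <;> ring
theorem sF4 {u : ℝ} (h0 : 0 ≤ u) (h1 : u ≤ 1) : sF ((3+u)/4) = (3/2 - u/4, 2) := by
  unfold sF
  rw [sclamp_hi (x := 4*((3+u)/4)) (by linarith), sclamp_hi (x := 4*((3+u)/4)-1) (by linarith),
    sclamp_hi (x := 4*((3+u)/4)-2) (by linarith), sclamp_eq (x := 4*((3+u)/4)-3) ⟨by linarith, by linarith⟩]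
  ext <;> simp only <;> ring

theorem sF_cases {s : ℝ} (h0 : 0 ≤ s) (h1 : s < 1) : ∃ u : ℝ, 0 ≤ u ∧ u < 1 ∧
    ((s = u/4 ∧ sF s = (1/4 + u/2, u)) ∨ (s = (1+u)/4 ∧ sF s = (3/4 + u/4, 1)) ∨
     (s = (2+u)/4 ∧ sF s = (1 + u/2, 1 + u)) ∨ (s = (3+u)/4 ∧ sF s = (3/2 - u/4, 2))) := by
  by_cases c1 : s < 1/4
  · refine ⟨4*s, by linarith, by linarith, Or.inl ⟨by ring, ?_⟩⟩
    rw [← sF1 (u := 4*s) (by linarith) (by linarith)]; congr 1; ring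
  by_cases c2 : s < 1/2
  · refine ⟨4*s-1, by linarith, by linarith, Or.inr (Or.inl ⟨by ring, ?_⟩)⟩
    rw [← sF2 (u := 4*s-1) (by linarith) (by linarith)]; congr 1; ring
  by_cases c3 : s < 3/4
  · refine ⟨4*s-2, by linarith, by linarith, Or.inr (Or.inr (Or.inl ⟨by ring, ?_⟩))⟩
    rw [← sF3 (u := 4*s-2) (by linarith) (by linarith)]; congr 1; ring
  · refine ⟨4*s-3, by linarith, by linarith, Or.inr (Or.inr (Or.inr ⟨by ring, ?_⟩))⟩
    rw [← sF4 (u := 4*s-3) (by linarith) (by linarith)]; congr 1; ring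

theorem int_range {m : ℤ} {x y : ℝ} (h : x = y + m) (h0' : -3 < x - y) (h1' : x - y < 3) :
    m = -2 ∨ m = -1 ∨ m = 0 ∨ m = 1 ∨ m = 2 := by
  have h0 : (-3:ℝ) < m := by linarith
  have h1 : (m:ℝ) < 3 := by linarith
  have a : -3 < m := by exact_mod_cast h0
  have b : m < 3 := by exact_mod_cast h1
  omega

set_option maxHeartbeats 4000000 in
theorem sF_inj {s t : ℝ} (hs0 : 0 ≤ s) (hs1 : s < 1) (ht0 : 0 ≤ t) (ht1 : t < 1) {a b : ℤ}
    (h : sF t = sF s + ((a:ℝ), (b:ℝ))) : s = t := by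
  obtain ⟨u, u0, u1, hu⟩ := sF_cases hs0 hs1
  obtain ⟨w, w0, w1, hw⟩ := sF_cases ht0 ht1
  rw [Prod.ext_iff] at h
  obtain ⟨h1, h2⟩ := h
  simp only [Prod.fst_add, Prod.snd_add] at h1 h2
  rcases hu with ⟨hu, e⟩ | ⟨hu, e⟩ | ⟨hu, e⟩ | ⟨hu, e⟩ <;>
  rcases hw with ⟨hw, e'⟩ | ⟨hw, e'⟩ | ⟨hw, e'⟩ | ⟨hw, e'⟩ <;>
  rw [e, e'] at h1 h2 <;> simp only at h1 h2 <;>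
  rcases int_range h2 (by linarith) (by linarith) with rfl | rfl | rfl | rfl | rfl <;>
  push_cast at h2 <;>
  first
  | (exfalso; linarith only [h2, u0, u1, w0, w1])
  | (rcases int_range h1 (by linarith) (by linarith) with rfl | rfl | rfl | rfl | rfl <;>
      push_cast at h1 <;>
      first
      | (exfalso; linarith only [h1, h2, u0, u1, w0, w1])
      | linarith only [h1, h2, hu, hw, u0, u1, w0, w1])

theorem sF_zero : sF 0 = (1/4, 0) := by
  have := sF1 (u := 0) le_rfl zero_le_one
  simpa using this
theorem sF_one : sF 1 = (5/4, 2) := by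
  have := sF4 (u := 1) zero_le_one le_rfl
  norm_num at this
  exact this

/-- the lift of the surgered curve in basis coordinates -/
noncomputable def sG (x : ℝ) : ℝ × ℝ :=
  (sF (Int.fract x) - (Int.fract x, 2 * Int.fract x)) + (x, 2 * x)

theorem sG_cont : Continuous sG := by
  have h1 : Continuous ((fun s : ℝ => sF s - (s, 2 * s)) ∘ Int.fract) := by
    apply ContinuousOn.comp_fract''
    · have := sF_cont
      fun_prop
    · rw [sF_zero, sF_one]; ext <;> norm_num
  have h2 : Continuous (fun x : ℝ => (x, 2 * x)) := by fun_prop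
  exact h1.add h2

theorem sG_eq (x : ℝ) : sG x = sF (Int.fract x) + (((⌊x⌋ : ℤ) : ℝ), ((2 * ⌊x⌋ : ℤ) : ℝ)) := by
  have := Int.floor_add_fract x
  unfold sG
  ext
  · simp only [Prod.fst_add, Prod.fst_sub]; linarith
  · simp only [Prod.snd_add, Prod.snd_sub]; push_cast; linarith

theorem sG_per (x : ℝ) : sG (x + 1) = sG x + (1, 2) := by
  unfold sG
  rw [Int.fract_add_one]
  ext
  · simp only [Prod.fst_add, Prod.fst_sub]; linarith
  · simp only [Prod.snd_add, Prod.snd_sub]; linarith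

theorem sG_unit {s : ℝ} (h0 : 0 ≤ s) (h1 : s ≤ 1) : sG s = sF s := by
  rcases eq_or_lt_of_le h1 with rfl | h
  · have := sG_per 0
    rw [zero_add] at this
    rw [this, sG_eq, sF_one]
    simp [sF_zero]; norm_num
  · rw [sG_eq, Int.fract_eq_self.2 ⟨h0, h⟩, Int.floor_eq_zero_iff.2 ⟨h0, h⟩]
    simp

set_option maxHeartbeats 4000000 in
theorem bwd_basis {v n : ℤ × ℤ} (h : n.1 * v.2 - n.2 * v.1 = 1 ∨ n.1 * v.2 - n.2 * v.1 = -1)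
    {w : ℤ × ℤ} (hv : IsCoprime v.1 v.2) (hw : IsCoprime w.1 w.2) (hw1 : w.1 = v.1 + 2 * n.1)
    (hw2 : w.2 = v.2 + 2 * n.2) :
    ∃ C C' : TorusCurve, C.p = v.1 ∧ C.q = v.2 ∧ C'.p = w.1 ∧ C'.q = w.2 ∧
      ObtainedBySurgery C.image C'.image := by
  have hBc := sB_cont v n
  have hGc := sG_cont
  have hB := sB_mk h
  refine ⟨⟨fun x => sB v n (x, 0), by fun_prop, v.1, v.2, hv, ?_, ?_⟩,
    ⟨fun x => sB v n (sG x), by fun_prop, w.1, w.2, hw, ?_, ?_⟩, rfl, rfl, rfl, rfl, ?_⟩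
  · intro x; ext <;> simp [sB] <;> ring
  · intro x y hxy
    obtain ⟨a, b, hab⟩ := (hB _ _).1 hxy
    rw [Prod.ext_iff] at hab
    exact ⟨a, by simpa using hab.1⟩
  · intro x
    rw [sG_per, hw1, hw2]; ext <;> simp [sB] <;> ring
  · intro x y hxy
    obtain ⟨a, b, hab⟩ := (hB _ _).1 hxy
    rw [sG_eq, sG_eq] at hab
    have : Int.fract x = Int.fract y := by
      apply sF_inj (Int.fract_nonneg _) (Int.fract_lt_one _) (Int.fract_nonneg _) (Int.fract_lt_one _)
        (a := a + ⌊x⌋ - ⌊y⌋) (b := b + 2 * ⌊x⌋ - 2 * ⌊y⌋)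
      rw [Prod.ext_iff] at hab
      simp only [Prod.fst_add, Prod.snd_add] at hab
      push_cast at hab
      ext
      · simp only [Prod.fst_add]; push_cast; linarith [hab.1]
      · simp only [Prod.snd_add]; push_cast; linarith [hab.2]
    refine ⟨⌊y⌋ - ⌊x⌋, ?_⟩
    have h1 := Int.floor_add_fract x
    have h2 := Int.floor_add_fract y
    push_cast; linarith
  · have hmc := mk_cont
    -- membership in the two curves
    have mC : ∀ x y : ℝ, ∀ b : ℤ, y = b → ∃ x', torusMk (sB v n (x', 0)) = torusMk (sB v n (x, y)) := by
      rintro x y b rfl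
      exact ⟨x, (hB _ _).2 ⟨0, b, by ext <;> simp⟩⟩
    have mC' : ∀ s : ℝ, 0 ≤ s → s ≤ 1 → ∀ z : ℝ × ℝ, ∀ a b : ℤ, z = sF s + ((a:ℝ), (b:ℝ)) →
        ∃ x, torusMk (sB v n (sG x)) = torusMk (sB v n z) := by
      intro s h0 h1 z a b hz
      exact ⟨s, (hB _ _).2 ⟨a, b, by rw [hz, sG_unit h0 h1]⟩⟩
    refine ⟨fun p => torusMk (sB v n (p.2/4 + p.1/2, p.1)), by fun_prop, ?_, ?_, ?_⟩
    · rintro ⟨u, r⟩ ⟨⟨u0, u1⟩, r0, r1⟩ ⟨u', r'⟩ ⟨⟨u0', u1'⟩, r0', r1'⟩ heq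
      obtain ⟨a, b, hab⟩ := (hB _ _).1 heq
      rw [Prod.ext_iff] at hab
      simp only [Prod.fst_add, Prod.snd_add] at hab u0 u1 r0 r1 u0' u1' r0' r1'
      obtain ⟨h1, h2⟩ := hab
      rcases int_range h1 (by linarith) (by linarith) with rfl | rfl | rfl | rfl | rfl <;>
      rcases int_range h2 (by linarith) (by linarith) with rfl | rfl | rfl | rfl | rfl <;>
      push_cast at h1 h2 <;> apply Prod.ext <;> simp only <;> linarith
    · apply Set.eq_of_subset_of_subset
      · rintro y ⟨⟨x, hx⟩, ⟨⟨u, r⟩, ⟨hu, hr⟩, heq⟩⟩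
        refine ⟨(u, r), ⟨?_, hr⟩, heq⟩
        rw [← heq] at hx
        obtain ⟨a, b, hab⟩ := (hB _ _).1 hx
        rw [Prod.ext_iff] at hab
        simp only [Prod.fst_add, Prod.snd_add] at hab
        obtain ⟨h1, h2⟩ := hab
        simp only at hu
        simp only [mem_insert_iff, mem_singleton_iff]
        rcases int_range h2 (by linarith [hu.1]) (by linarith [hu.2]) with rfl | rfl | rfl | rfl | rfl <;>
        push_cast at h2
        · linarith [hu.1]
        · linarith [hu.1]
        · left; linarith
        · right; linarith
        · linarith [hu.2]
      · rintro y ⟨⟨u, r⟩, ⟨hu, hr⟩, rfl⟩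
        rcases hu with hu | hu
        · simp only at hu; subst hu
          exact ⟨mC (r/4 + 0/2) 0 0 (by norm_num), (0, r), ⟨s0mem, hr⟩, rfl⟩
        · simp only [mem_singleton_iff] at hu; subst hu
          exact ⟨mC (r/4 + 1/2) 1 1 (by norm_num), (1, r), ⟨s1mem, hr⟩, rfl⟩
    · apply Set.eq_of_subset_of_subset
      · rintro y ⟨x, rfl⟩
        simp only
        have hx : torusMk (sB v n (sG x)) = torusMk (sB v n (sF (Int.fract x))) := by
          rw [eq_comm, hB]; exact ⟨_, _, sG_eq x⟩
        rw [hx]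
        obtain ⟨u, u0, u1, hu⟩ := sF_cases (Int.fract_nonneg x) (Int.fract_lt_one x)
        rcases hu with ⟨hu, e⟩ | ⟨hu, e⟩ | ⟨hu, e⟩ | ⟨hu, e⟩ <;> rw [e]
        · right
          exact ⟨(u, 1), ⟨⟨u0, u1.le⟩, by simp⟩, rfl⟩
        · rcases eq_or_lt_of_le u0 with h' | h'
          · right
            refine ⟨(1, 1), ⟨s1mem, by simp⟩, ?_⟩
            rw [← h']; norm_num
          · left
            refine ⟨mC (3/4 + u/4) 1 1 (by norm_num), ?_⟩
            rintro ⟨⟨u', r⟩, ⟨hu', r0, r1⟩, heq⟩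
            obtain ⟨a, b, hab⟩ := (hB _ _).1 heq
            rw [Prod.ext_iff] at hab
            simp only [Prod.fst_add, Prod.snd_add] at hab r0 r1
            obtain ⟨h1, h2⟩ := hab
            simp only [mem_insert_iff, mem_singleton_iff] at hu'
            rcases hu' with rfl | rfl <;>
            rcases int_range h1 (by linarith) (by linarith) with rfl | rfl | rfl | rfl | rfl <;>
            push_cast at h1 <;> linarith
        · right
          refine ⟨(u, 0), ⟨⟨u0, u1.le⟩, by simp⟩, ?_⟩
          exact (hB _ _).2 ⟨1, 1, by ext <;> simp <;> ring⟩
        · rcases eq_or_lt_of_le u0 with h' | h'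
          · right
            refine ⟨(1, 0), ⟨s1mem, by simp⟩, ?_⟩
            rw [← h']
            exact (hB _ _).2 ⟨1, 1, by ext <;> norm_num⟩
          · left
            refine ⟨mC (3/2 - u/4) 2 2 (by norm_num), ?_⟩
            rintro ⟨⟨u', r⟩, ⟨hu', r0, r1⟩, heq⟩
            obtain ⟨a, b, hab⟩ := (hB _ _).1 heq
            rw [Prod.ext_iff] at hab
            simp only [Prod.fst_add, Prod.snd_add] at hab r0 r1
            obtain ⟨h1, h2⟩ := hab
            simp only [mem_insert_iff, mem_singleton_iff] at hu'
            rcases hu' with rfl | rfl <;>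
            rcases int_range h1 (by linarith) (by linarith) with rfl | rfl | rfl | rfl | rfl <;>
            push_cast at h1 <;> linarith
      · rintro y (⟨⟨x, rfl⟩, hn⟩ | ⟨⟨u, r⟩, ⟨hu, hr⟩, rfl⟩)
        · simp only at hn ⊢
          have hx : torusMk (sB v n (x, 0)) = torusMk (sB v n (Int.fract x, 0)) := by
            rw [eq_comm, hB]
            refine ⟨⌊x⌋, 0, ?_⟩
            have := Int.floor_add_fract x
            ext
            · simp
            · simp
          rw [hx] at hn ⊢
          have x0 := Int.fract_nonneg x
          have x1 := Int.fract_lt_one x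
          set z := Int.fract x
          by_cases c1 : z ≤ 1/4
          · exfalso; apply hn
            refine ⟨(0, 4*z), ⟨by simp, ⟨by simp only; linarith, by simp only; linarith⟩⟩, ?_⟩
            simp only; congr 2; ext
            · simp only; ring
            · rfl
          by_cases c2 : z < 1/2
          · exact mC' ((3 + (2 - 4*z))/4) (by linarith) (by linarith) (z, 0) (-1) (-2) (by
              rw [sF4 (by linarith) (by linarith)]
              ext
              · simp only [Prod.fst_add]; push_cast; ring
              · simp)
          by_cases c3 : z ≤ 3/4
          · exfalso; apply hn
            refine ⟨(1, 4*z-2), ⟨by simp, ⟨by simp only; linarith, by simp only; linarith⟩⟩, ?_⟩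
            refine (hB _ _).2 ⟨0, -1, ?_⟩
            ext
            · simp only [Prod.fst_add]; push_cast; ring
            · simp
          · exact mC' ((1 + (4*z-3))/4) (by linarith) (by linarith) (z, 0) 0 (-1) (by
              rw [sF2 (by linarith) (by linarith)]
              ext
              · simp only [Prod.fst_add]; push_cast; ring
              · simp)
        · obtain ⟨u0, u1⟩ := hu
          simp only at u0 u1
          rcases hr with hr | hr
          · simp only at hr; subst hr
            exact mC' ((2 + u)/4) (by linarith) (by linarith) _ (-1) (-1) (by
              rw [sF3 u0 u1]
              ext
              · simp only [Prod.fst_add]; push_cast; ring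
              · simp)
          · simp only [mem_singleton_iff] at hr; subst hr
            exact mC' (u/4) (by linarith) (by linarith) _ 0 0 (by
              rw [sF1 u0 u1]
              ext
              · simp
              · simp)

theorem bwd (v w : ℤ × ℤ) (hv : IsCoprime v.1 v.2) (hw : IsCoprime w.1 w.2)
    (h : w.1 * v.2 - w.2 * v.1 = 2 ∨ w.1 * v.2 - w.2 * v.1 = -2) :
    ∃ C C' : TorusCurve, C.p = v.1 ∧ C.q = v.2 ∧ C'.p = w.1 ∧ C'.q = w.2 ∧
      ObtainedBySurgery C.image C'.image := by
  obtain ⟨v1, v2⟩ := v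
  obtain ⟨w1, w2⟩ := w
  simp only at hv hw h ⊢
  have hcop : ∀ a b : ℤ, IsCoprime (2 * a) (2 * b) → False := by
    intro a b hab
    have := hab.isUnit_of_dvd' (dvd_mul_right 2 a) (dvd_mul_right 2 b)
    rw [Int.isUnit_iff] at this
    omega
  have hpar : ∃ n1 n2 : ℤ, w1 = v1 + 2 * n1 ∧ w2 = v2 + 2 * n2 := by
    have hev : ∃ k : ℤ, w1 * v2 - w2 * v1 = 2 * k := by
      rcases h with h | h
      · exact ⟨1, by rw [h]; norm_num⟩
      · exact ⟨-1, by rw [h]; norm_num⟩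
    obtain ⟨k, hk⟩ := hev
    obtain ⟨a, rfl | rfl⟩ := Int.even_or_odd' v1 <;> obtain ⟨b, rfl | rfl⟩ := Int.even_or_odd' v2 <;>
    obtain ⟨c, rfl | rfl⟩ := Int.even_or_odd' w1 <;> obtain ⟨d, rfl | rfl⟩ := Int.even_or_odd' w2 <;>
    first
    | exact (hcop _ _ hv).elim
    | exact (hcop _ _ hw).elim
    | exact ⟨c - a, d - b, by omega, by omega⟩
    | (exfalso; ring_nf at hk; omega)
  obtain ⟨n1, n2, rfl, rfl⟩ := hpar
  refine bwd_basis (v := (v1, v2)) (n := (n1, n2)) (w := (v1 + 2 * n1, v2 + 2 * n2)) ?_ hv hw rfl rfl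
  simp only
  rcases h with h | h
  · left; linarith
  · right; linarith

end

/-- Let `T` be the torus and `C, C'` essential oriented simple closed
curves on `T`, of (primitive) homology classes `v` and `w`.  Then `C'`
can be obtained from `C` by a surgery along an embedded arc if and only
if the algebraic intersection number `C'·C = w.1 * v.2 - w.2 * v.1`
equals `±2`.  (Curves on the torus are determined up to isotopy by their
homology class.) -/
theorem surgery_iff_intersection_two (v w : ℤ × ℤ)
    (hv : IsCoprime v.1 v.2) (hw : IsCoprime w.1 w.2) :
    (∃ C C' : TorusCurve, C.p = v.1 ∧ C.q = v.2 ∧ C'.p = w.1 ∧ C'.q = w.2 ∧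
      ObtainedBySurgery C.image C'.image) ↔
    (w.1 * v.2 - w.2 * v.1 = 2 ∨ w.1 * v.2 - w.2 * v.1 = -2) := by
  constructor
  · rintro ⟨C, C', h1, h2, h3, h4, h⟩
    have := fwd C C' h
    rw [h1, h2, h3, h4] at this
    exact this
  · exact bwd v w hv hw
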